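/- Let k ≥ 1 be an integer and let G be a simple graph of order n ≥ max{6k+11, k²+2k+3}. If q(G) ≥ q(L_{n,k}), then G contains a cycle C_ℓ for every integer ℓ with 3 ≤ ℓ ≤ n−k+1, unless G is isomorphic to L_{n,k}. -/

import Mathlib

open SimpleGraph

/-- `G` contains a cycle of length `l`. -/
def HasCycleLen {V : Type} (G : SimpleGraph V) (l : ℕ) : Prop :=
  ∃ (v : V) (c : G.Walk v v), c.IsCycle ∧ c.length = l

/-- The circumference of `G`: the length of a longest cycle. -/
noncomputable def circumference {V : Type} (G : SimpleGraph V) : ℕ :=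
  sSup {l | HasCycleLen G l}

/-- `G` is weakly pancyclic with girth 3: it contains a cycle of every length `l`
with `3 ≤ l ≤ c(G)`. -/
def WeaklyPancyclic3 {V : Type} (G : SimpleGraph V) : Prop :=
  HasCycleLen G 3 ∧ ∀ l : ℕ, 3 ≤ l → l ≤ circumference G → HasCycleLen G l

/-- The number of edges of `G`. -/
noncomputable def edgeCount {V : Type} (G : SimpleGraph V) : ℕ :=
  Nat.card G.edgeSet

/-- The degree of `v` in `G`. -/
noncomputable def degCount {V : Type} (G : SimpleGraph V) (v : V) : ℕ :=
  Nat.card (G.neighborSet v)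

/-- The spectral radius of `G`: the largest eigenvalue of the adjacency matrix. -/
noncomputable def specRad {V : Type} [Finite V] (G : SimpleGraph V) : ℝ :=
  letI := Fintype.ofFinite V
  letI := Classical.decEq V
  letI := Classical.decRel G.Adj
  sSup (spectrum ℝ (G.adjMatrix ℝ))

/-- The signless Laplacian spectral radius of `G`: the largest eigenvalue of `D(G) + A(G)`. -/
noncomputable def qSpecRad {V : Type} [Finite V] (G : SimpleGraph V) : ℝ :=
  letI := Fintype.ofFinite V
  letI := Classical.decEq V
  letI := Classical.decRel G.Adj
  sSup (spectrum ℝ (Matrix.diagonal (fun v => (degCount G v : ℝ)) + G.adjMatrix ℝ))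

/-- `L_{n,k} = K_1 ∨ (K_{n-k-1} + K_k)`: vertex `0` is the common vertex of a clique on
the `n - k` vertices `{0, …, n-k-1}` and a clique on the `k+1` vertices `{0} ∪ {n-k, …, n-1}`. -/
def Lgraph (n k : ℕ) : SimpleGraph (Fin n) :=
  SimpleGraph.fromRel (fun u v =>
    u.val = 0 ∨ v.val = 0 ∨ (u.val < n - k ∧ v.val < n - k) ∨
      (n - k ≤ u.val ∧ n - k ≤ v.val))

/-- `Γ_{n,t} = K_2 ∨ (K_{n-2-t} + t·K_1)`: vertices `0,1` are joined to everything,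
vertices `2, …, n-t-1` form a clique, and vertices `n-t, …, n-1` are independent. -/
def GammaGraph (n t : ℕ) : SimpleGraph (Fin n) :=
  SimpleGraph.fromRel (fun u v =>
    u.val < 2 ∨ v.val < 2 ∨ (u.val < n - t ∧ v.val < n - t))

/-- `F` is a member of the family `F_{n,k}`: there is a clique `K` on `n - k` vertices
such that each connected component of `F - K` is a clique all of whose vertices are
adjacent to one single common vertex of `K` and to no other vertex of `K`. -/
def MemF (n k : ℕ) (F : SimpleGraph (Fin n)) : Prop :=
  ∃ K : Finset (Fin n), K.card = n - k ∧ F.IsClique (↑K : Set (Fin n)) ∧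
    (∀ u v : ({x : Fin n | x ∉ K} : Set (Fin n)),
      (F.induce {x : Fin n | x ∉ K}).Reachable u v → (u = v ∨ F.Adj u.1 v.1)) ∧
    (∀ u : ({x : Fin n | x ∉ K} : Set (Fin n)), ∃! w : Fin n, w ∈ K ∧ F.Adj u.1 w) ∧
    (∀ u v : ({x : Fin n | x ∉ K} : Set (Fin n)),
      (F.induce {x : Fin n | x ∉ K}).Reachable u v →
        ∀ w ∈ K, F.Adj u.1 w → F.Adj v.1 w)

/-- `G` is a subgraph of `H` (up to relabelling): there is an injective graph
homomorphism from `G` to `H`. -/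
def IsSubgraphOf {n : ℕ} (G H : SimpleGraph (Fin n)) : Prop :=
  ∃ f : G →g H, Function.Injective f

/-!
Counting edges through the bound `q(G) ≤ 2e(G)/(n-1) + n - 2` of Feng and Yu, and using that
`L_{n,k}` is connected and properly contains a clique on `n - k` vertices, `q(G) ≥ q(L_{n,k})`
forces `G` to miss fewer than `k(n-1)` edges. With so few missing edges, a graph with a cycle of
length `m ≥ n - k + 1` contains cycles of all lengths up to `m`.

Otherwise pass to an edge-maximal supergraph of `G` with circumference at most `n - k`. As in
Chvátal's closure argument for hamiltonicity, degree sums of nonadjacent vertices are small there,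
so that the vertices of large degree form a clique `K`. A vertex outside `K` with two neighbours in
`K` would let a cycle through `K` be lengthened, and counting missing edges forces `#K = n - k` with
each outer vertex having at most one neighbour in `K`. Finally, moving all edges that leave `K` to
the vertex of `K` with largest entry in the Perron vector of `G` and filling in the edges outside
`K` turns `G` into `L_{n,k}` and does not decrease the Rayleigh quotient, so `G` is `L_{n,k}` when
`q(G) ≥ q(L_{n,k})`.
-/

open Finset Matrix

/-! ### Paths and cycles as sequences of vertices -/

/-- `p 0, p 1, …, p (l - 1)` are the successive vertices of a path on `l` vertices of `G`.
The values of `p` beyond `l - 1` are irrelevant. -/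
structure IsPathSeq {V : Type*} (G : SimpleGraph V) (l : ℕ) (p : ℕ → V) : Prop where
  injOn : Set.InjOn p (Set.Iio l)
  adj : ∀ i, i + 1 < l → G.Adj (p i) (p (i + 1))

/-- `p 0, p 1, …, p (l - 1)` are the successive vertices of a cycle of length `l` of `G`. -/
structure IsCycleSeq {V : Type*} (G : SimpleGraph V) (l : ℕ) (p : ℕ → V) : Prop
    extends IsPathSeq G l p where
  three_le : 3 ≤ l
  adj_last : G.Adj (p (l - 1)) (p 0)

section PathSeq

variable {V : Type*} {G H : SimpleGraph V} {l m : ℕ} {p : ℕ → V}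

theorem IsPathSeq.inj (h : IsPathSeq G l p) {i j : ℕ} (hi : i < l) (hj : j < l) :
    p i = p j ↔ i = j :=
  h.injOn.eq_iff hi hj

theorem IsPathSeq.map_graph (h : IsPathSeq G l p)
    (hGH : ∀ i, i + 1 < l → G.Adj (p i) (p (i + 1)) → H.Adj (p i) (p (i + 1))) :
    IsPathSeq H l p where
  injOn := h.injOn
  adj i hi := hGH i hi (h.adj i hi)

theorem IsPathSeq.le_card [Finite V] (h : IsPathSeq G l p) : l ≤ Nat.card V := by
  have := Fintype.ofFinite V
  simpa using Finset.card_le_card_of_injOn (s := range l) p (fun _ _ => mem_univ _)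
    (by simpa using h.injOn)

theorem IsCycleSeq.adj_mod (h : IsCycleSeq G l p) (i : ℕ) :
    G.Adj (p (i % l)) (p ((i + 1) % l)) := by
  have hl := h.three_le
  have hi : i % l < l := Nat.mod_lt _ (by omega)
  rw [← Nat.mod_add_mod i l 1]
  rcases (Nat.succ_le_of_lt hi).lt_or_eq with hlt | heq
  · rw [Nat.mod_eq_of_lt hlt]
    exact h.adj _ hlt
  · rw [show i % l + 1 = l from heq, Nat.mod_self, show i % l = l - 1 by omega]
    exact h.adj_last

theorem IsCycleSeq.rotate (h : IsCycleSeq G l p) (t : ℕ) :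
    IsCycleSeq G l fun i => p ((i + t) % l) where
  injOn i hi j hj hij := by
    have hl : 0 < l := by have := h.three_le; omega
    have hmod : i + t ≡ j + t [MOD l] := (h.inj (Nat.mod_lt _ hl) (Nat.mod_lt _ hl)).1 hij
    exact (Nat.ModEq.add_right_cancel' t hmod).eq_of_lt_of_lt hi hj
  adj i _ := by
    rw [Nat.add_right_comm]
    exact h.adj_mod (i + t)
  three_le := h.three_le
  adj_last := by
    have hl := h.three_le
    have := h.adj_mod (l - 1 + t)
    rwa [show l - 1 + t + 1 = 0 + t + l by omega, Nat.add_mod_right] at this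

theorem IsCycleSeq.chord_forward (h : IsCycleSeq G m p) {j : ℕ} (hl : 3 ≤ l) (hlj : l ≤ j + 1)
    (hjm : j < m) (h0 : G.Adj (p 0) (p j)) (h1 : G.Adj (p 1) (p (j + 3 - l))) :
    IsCycleSeq G l fun i => p (if i < 2 then i else j + 1 + i - l) where
  injOn a ha b hb hab := by
    have ha : a < l := ha
    have hb : b < l := hb
    have := (h.inj (by split_ifs <;> omega) (by split_ifs <;> omega)).1 hab
    split_ifs at this <;> omega
  adj i hi := by
    obtain rfl | rfl | h2 : i = 0 ∨ i = 1 ∨ 2 ≤ i := by omega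
    · simpa using h.adj 0 (by omega)
    · simpa [show j + 1 + 2 - l = j + 3 - l by omega] using h1
    · have := h.adj (j + 1 + i - l) (by omega)
      simpa [show ¬ i < 2 by omega, show ¬ i + 1 < 2 by omega,
        show j + 1 + (i + 1) - l = j + 1 + i - l + 1 by omega] using this
  three_le := hl
  adj_last := by
    simpa [show ¬ l - 1 < 2 by omega, show j + 1 + (l - 1) - l = j by omega] using h0.symm

theorem IsCycleSeq.chord_backward (h : IsCycleSeq G m p) {j : ℕ} (hlm : l ≤ m) (hj : 2 ≤ j)
    (hjl : j + 2 ≤ l) (h0 : G.Adj (p 0) (p j)) (h1 : G.Adj (p 1) (p (j + m + 1 - l))) :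
    IsCycleSeq G l fun i => p (if i < j then i + 1 else if i = j then 0 else m + j - i) where
  injOn a ha b hb hab := by
    have ha : a < l := ha
    have hb : b < l := hb
    have := (h.inj (by split_ifs <;> omega) (by split_ifs <;> omega)).1 hab
    split_ifs at this <;> omega
  adj i hi := by
    obtain h2 | rfl | rfl | h2 : i + 1 < j ∨ j = i + 1 ∨ i = j ∨ j < i := by omega
    · simpa [show i < j by omega, h2] using h.adj (i + 1) (by omega)
    · simpa using h0.symm
    · simpa [show m + i - (i + 1) = m - 1 by omega] using h.adj_last.symm
    · have := h.adj (m + j - (i + 1)) (by omega)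
      rw [show m + j - (i + 1) + 1 = m + j - i by omega] at this
      simpa [show ¬ i < j by omega, show ¬ i = j by omega, show ¬ i + 1 < j by omega,
        show ¬ i + 1 = j by omega] using this.symm
  three_le := by omega
  adj_last := by
    simpa [show ¬ l - 1 < j by omega, show ¬ l - 1 = j by omega, show 0 < j by omega,
      show m + j - (l - 1) = j + m + 1 - l by omega] using h1.symm

end PathSeq

section Circumference

variable {V : Type} {G : SimpleGraph V} {l : ℕ} {p : ℕ → V}

theorem IsCycleSeq.hasCycleLen (h : IsCycleSeq G l p) : HasCycleLen G l := by
  have hl := h.three_le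
  rw [HasCycleLen, ← cycleGraph_isContained_iff (by omega)]
  have adj_of_sub : ∀ a b : Fin l, (a - b).val = 1 → G.Adj (p b) (p a) := by
    intro a b hab
    rcases lt_or_ge a b with hlt | hge
    · rw [Fin.coe_sub_iff_lt.2 hlt] at hab
      rw [show a.val = 0 by omega, show b.val = l - 1 by omega]
      exact h.adj_last
    · rw [Fin.sub_val_of_le hge] at hab
      rw [show a.val = b.val + 1 by omega]
      exact h.adj _ (by omega)
  refine ⟨⟨⟨fun i => p i, fun {a b} hab => ?_⟩, fun a b hab => ?_⟩⟩
  · exact (cycleGraph_adj'.1 hab).elim (fun h => (adj_of_sub _ _ h).symm) (adj_of_sub _ _)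
  · exact Fin.ext (h.injOn a.2 b.2 hab)

theorem hasCycleLen_iff_exists_isCycleSeq : HasCycleLen G l ↔ ∃ p, IsCycleSeq G l p := by
  refine ⟨?_, fun ⟨_, h⟩ => h.hasCycleLen⟩
  rintro ⟨v, c, hc, rfl⟩
  have hl := hc.three_le_length
  refine ⟨c.getVert, ⟨fun i hi j hj hij => ?_, fun i hi => ?_⟩, hl, ?_⟩
  · have hi : i < c.length := hi
    have hj : j < c.length := hj
    exact hc.getVert_injOn' (show i ≤ c.length - 1 by omega) (show j ≤ c.length - 1 by omega) hij
  · exact c.adj_getVert_succ (by omega)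
  · have := c.adj_getVert_succ (i := c.length - 1) (by omega)
    simpa [Nat.sub_add_cancel (show 1 ≤ c.length by omega)] using this

theorem HasCycleLen.le_circumference [Finite V] (h : HasCycleLen G l) : l ≤ circumference G := by
  refine le_csSup ⟨Nat.card V, fun l hl => ?_⟩ h
  obtain ⟨_, hp⟩ := hasCycleLen_iff_exists_isCycleSeq.1 hl
  exact hp.toIsPathSeq.le_card

theorem IsCycleSeq.le_circumference [Finite V] (h : IsCycleSeq G l p) : l ≤ circumference G :=
  h.hasCycleLen.le_circumference

theorem exists_isCycleSeq_circumference [Finite V] (h : 0 < circumference G) :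
    ∃ p, IsCycleSeq G (circumference G) p := by
  have hne : {l | HasCycleLen G l}.Nonempty := by
    by_contra hempty
    simp [circumference, Set.not_nonempty_iff_eq_empty.1 hempty] at h
  exact hasCycleLen_iff_exists_isCycleSeq.1 <|
    Nat.sSup_mem hne ⟨Nat.card V, fun l hl =>
      (hasCycleLen_iff_exists_isCycleSeq.1 hl).elim fun _ hp => hp.toIsPathSeq.le_card⟩

end Circumference

/-! ### Pancyclicity of dense cycles -/

section Pancyclic

variable {V : Type*} [Fintype V] [DecidableEq V] {G : SimpleGraph V} [DecidableRel G.Adj]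
  {l m : ℕ} {p : ℕ → V}

theorem IsPathSeq.card_filter_not_adj_le (h : IsPathSeq G m p) {a : ℕ} (ha : a < m) {s : Finset ℕ}
    {σ : ℕ → ℕ} (hσ : Set.InjOn σ s) (hs : ∀ j ∈ s, σ j < m ∧ σ j ≠ a) :
    #{j ∈ s | ¬ G.Adj (p a) (p (σ j))} ≤ Gᶜ.degree (p a) := by
  rw [← card_neighborFinset_eq_degree]
  refine card_le_card_of_injOn (fun j => p (σ j)) (fun j hj => ?_) fun i hi j hj hij => ?_
  · have hj := mem_filter.1 (mem_coe.1 hj)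
    have hne : p a ≠ p (σ j) := fun he => (hs j hj.1).2 ((h.inj ha (hs j hj.1).1).1 he).symm
    simpa using ⟨hne, hj.2⟩
  · have hi := mem_filter.1 (mem_coe.1 hi)
    have hj := mem_filter.1 (mem_coe.1 hj)
    exact hσ hi.1 hj.1 ((h.inj (hs i hi.1).1 (hs j hj.1).1).1 hij)

/-- For each `j` between `2` and `m - 1` the chords `p 0 p j` and `p 1 p (σ j)` would cut the cycle
down to length `l`, so one of them is missing; as `σ` is a permutation of the indices, this needs
many missing edges at `p 0` and `p 1`. -/
theorem IsCycleSeq.exists_of_degree_compl_add_le (h : IsCycleSeq G m p)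
    (hdeg : Gᶜ.degree (p 0) + Gᶜ.degree (p 1) + 3 ≤ m) (hl : 3 ≤ l) (hlm : l ≤ m) :
    ∃ q, IsCycleSeq G l q := by
  by_contra hno
  set σ : ℕ → ℕ := fun j => if l ≤ j + 1 then j + 3 - l else j + m + 1 - l with hσ
  have hσ_lt : ∀ j ∈ Ico 2 m, 2 ≤ σ j ∧ σ j < m := by
    intro j hj
    have := mem_Ico.1 hj
    simp only [hσ]
    split_ifs <;> omega
  have hσ_inj : Set.InjOn σ (Ico 2 m) := by
    intro i hi j hj hij
    have hi := mem_Ico.1 (mem_coe.1 hi)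
    have hj := mem_Ico.1 (mem_coe.1 hj)
    simp only [hσ] at hij
    split_ifs at hij <;> omega
  have hcover : Ico 2 m ⊆
      {j ∈ Ico 2 m | ¬ G.Adj (p 0) (p j)} ∪ {j ∈ Ico 2 m | ¬ G.Adj (p 1) (p (σ j))} := by
    intro j hj
    rw [← filter_or, mem_filter]
    refine ⟨hj, ?_⟩
    by_contra! hchords
    have hj := mem_Ico.1 hj
    by_cases hlj : l ≤ j + 1
    · exact hno ⟨_, h.chord_forward hl hlj hj.2 hchords.1 (by simpa [hσ, hlj] using hchords.2)⟩
    · exact hno ⟨_, h.chord_backward hlm hj.1 (by omega) hchords.1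
        (by simpa [hσ, hlj] using hchords.2)⟩
  have h0 : #{j ∈ Ico 2 m | ¬ G.Adj (p 0) (p j)} ≤ Gᶜ.degree (p 0) :=
    h.card_filter_not_adj_le (σ := id) (by omega) Function.injective_id.injOn fun j hj => by
      have := mem_Ico.1 hj
      simp only [id]
      omega
  have h1 : #{j ∈ Ico 2 m | ¬ G.Adj (p 1) (p (σ j))} ≤ Gᶜ.degree (p 1) :=
    h.card_filter_not_adj_le (by omega) hσ_inj fun j hj => by
      have := hσ_lt j hj
      omega
  have := (card_le_card hcover).trans (card_union_le _ _)
  rw [Nat.card_Ico] at this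
  omega

/-- Averaged over the edges of the cycle, the two ends of an edge miss fewer than `m - 2` edges
in total, so some edge of the cycle satisfies the preceding criterion. -/
theorem IsCycleSeq.exists_of_card_edgeFinset_compl_lt (h : IsCycleSeq G m p)
    (he : 4 * #Gᶜ.edgeFinset < m * (m - 2)) (hl : 3 ≤ l) (hlm : l ≤ m) :
    ∃ q, IsCycleSeq G l q := by
  have hm := h.three_le
  have sum_le : ∀ q, IsCycleSeq G m q → ∑ i ∈ range m, Gᶜ.degree (q i) ≤ 2 * #Gᶜ.edgeFinset := by
    intro q hq
    rw [← sum_degrees_eq_twice_card_edges,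
      ← sum_image (f := fun v => Gᶜ.degree v) (by simpa using hq.injOn)]
    exact sum_le_univ_sum_of_nonneg fun _ => Nat.zero_le _
  obtain ⟨i, -, hlight⟩ : ∃ i ∈ range m,
      Gᶜ.degree (p (i % m)) + Gᶜ.degree (p ((i + 1) % m)) < m - 2 := by
    refine exists_lt_of_sum_lt ?_
    have hsum0 := sum_le _ (h.rotate 0)
    have hsum1 := sum_le _ (h.rotate 1)
    simp only [Nat.add_zero] at hsum0
    simp only [sum_add_distrib, sum_const, card_range, smul_eq_mul]
    omega
  refine (h.rotate i).exists_of_degree_compl_add_le ?_ hl hlm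
  rw [Nat.zero_add, Nat.add_comm 1]
  omega

end Pancyclic

/-! ### Edge-maximal graphs of given circumference -/

section Ore

theorem IsPathSeq.isCycleSeq_of_crossing {V : Type*} {G : SimpleGraph V} {l i : ℕ} {p : ℕ → V}
    (h : IsPathSeq G l p) (hl : 3 ≤ l) (hi : i + 1 < l) (h0 : G.Adj (p 0) (p (i + 1)))
    (hlast : G.Adj (p i) (p (l - 1))) :
    IsCycleSeq G l fun t => p (if t ≤ i then t else l + i - t) where
  injOn a ha b hb hab := by
    have ha : a < l := ha
    have hb : b < l := hb
    have := (h.inj (by split_ifs <;> omega) (by split_ifs <;> omega)).1 hab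
    split_ifs at this <;> omega
  adj t ht := by
    obtain hlt | rfl | hgt : t < i ∨ t = i ∨ i < t := by omega
    · simpa [hlt.le, show t + 1 ≤ i by omega] using h.adj t ht
    · simpa [show l + t - (t + 1) = l - 1 by omega] using hlast
    · have := h.adj (l + i - (t + 1)) (by omega)
      rw [show l + i - (t + 1) + 1 = l + i - t by omega] at this
      simpa [show ¬ t ≤ i by omega, show ¬ t + 1 ≤ i by omega] using this.symm
  three_le := hl
  adj_last := by
    simpa [show ¬ l - 1 ≤ i by omega, show l + i - (l - 1) = i + 1 by omega] using h0.symm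

theorem IsPathSeq.isCycleSeq_update {V : Type*} {G : SimpleGraph V} {l : ℕ} {p : ℕ → V} {w : V}
    (h : IsPathSeq G l p) (hl : 2 ≤ l) (hw : ∀ i < l, p i ≠ w) (h0 : G.Adj (p 0) w)
    (hlast : G.Adj (p (l - 1)) w) : IsCycleSeq G (l + 1) (Function.update p l w) where
  injOn a ha b hb hab := by
    have ha : a < l + 1 := ha
    have hb : b < l + 1 := hb
    obtain hal | rfl := Nat.lt_succ_iff_lt_or_eq.1 ha <;>
      obtain hbl | rfl := Nat.lt_succ_iff_lt_or_eq.1 hb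
    · simpa [hal.ne, hbl.ne, h.inj hal hbl] using hab
    · exact absurd (by simpa [hal.ne] using hab) (hw a hal)
    · exact absurd (by simpa [hbl.ne] using hab.symm) (hw b hbl)
    · rfl
  adj t ht := by
    obtain hlt | rfl : t + 1 < l ∨ l = t + 1 := by omega
    · simpa [hlt.ne, show t ≠ l by omega] using h.adj t hlt
    · simpa using hlast
  three_le := by omega
  adj_last := by simpa [show 0 ≠ l by omega] using h0.symm

variable {V : Type} [Fintype V] {G : SimpleGraph V} [DecidableRel G.Adj] {l : ℕ} {p : ℕ → V}

/-- Ore's argument: a neighbour `p (i + 1)` of `p 0` forbids the neighbour `p i` of `p (l - 1)`, and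
the two ends of the path have no common neighbour outside it. -/
theorem IsPathSeq.degree_add_degree_lt (h : IsPathSeq G l p) (hl : 3 ≤ l)
    (hc : circumference G < l) : G.degree (p 0) + G.degree (p (l - 1)) < Fintype.card V := by
  classical
  set P := (range l).image p with hP
  set S := {i ∈ range (l - 1) | G.Adj (p 0) (p (i + 1))} with hS
  set T := {i ∈ range (l - 1) | G.Adj (p i) (p (l - 1))} with hT
  have hPcard : #P = l := by rw [hP, card_image_of_injOn (by simpa using h.injOn), card_range]
  have h_inside : #S + #T ≤ l - 1 := by
    rw [← card_range (l - 1), ← card_union_of_disjoint]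
    · exact card_le_card (union_subset (filter_subset _ _) (filter_subset _ _))
    · refine disjoint_left.2 fun i hiS hiT => hc.not_ge ?_
      simp only [hS, hT, mem_filter, mem_range] at hiS hiT
      exact (h.isCycleSeq_of_crossing hl (by omega) hiS.2 hiT.2).le_circumference
  have h_outside : #(G.neighborFinset (p 0) \ P) + #(G.neighborFinset (p (l - 1)) \ P) ≤
      Fintype.card V - l := by
    have hPcompl : #Pᶜ = Fintype.card V - l := by rw [card_compl, hPcard]
    rw [← hPcompl, ← card_union_of_disjoint]
    · refine card_le_card (union_subset ?_ ?_) <;>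
        exact fun w hw => mem_compl.2 (mem_sdiff.1 hw).2
    · refine disjoint_left.2 fun w h0 hlast => (hc.trans (Nat.lt_succ_self l)).not_ge ?_
      simp only [hP, mem_sdiff, mem_neighborFinset, mem_image, mem_range, not_exists, not_and]
        at h0 hlast
      exact (h.isCycleSeq_update (by omega) h0.2 h0.1 hlast.1).le_circumference
  have h_first : #(G.neighborFinset (p 0) ∩ P) ≤ #S := by
    refine (card_le_card (t := S.image fun i => p (i + 1)) fun w hw => ?_).trans card_image_le
    simp only [hP, mem_inter, mem_neighborFinset, mem_image, mem_range] at hw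
    obtain ⟨h0, i, hi, rfl⟩ := hw
    obtain ⟨j, rfl⟩ := Nat.exists_eq_succ_of_ne_zero (show i ≠ 0 by rintro rfl; exact h0.ne rfl)
    exact mem_image.2 ⟨j, by simpa [hS] using ⟨by omega, h0⟩, rfl⟩
  have h_last : #(G.neighborFinset (p (l - 1)) ∩ P) ≤ #T := by
    refine (card_le_card (t := T.image p) fun w hw => ?_).trans card_image_le
    simp only [hP, mem_inter, mem_neighborFinset, mem_image, mem_range] at hw
    obtain ⟨hlast, i, hi, rfl⟩ := hw
    have : i ≠ l - 1 := by rintro rfl; exact hlast.ne rfl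
    exact mem_image_of_mem p (by simpa [hT] using ⟨by omega, hlast.symm⟩)
  have hl_le := h.le_card
  rw [Nat.card_eq_fintype_card] at hl_le
  rw [← card_neighborFinset_eq_degree, ← card_neighborFinset_eq_degree,
    ← card_inter_add_card_sdiff _ P, ← card_inter_add_card_sdiff (G.neighborFinset (p (l - 1))) P]
  omega

theorem degree_add_degree_lt_of_maximal_circumference_lt {L : ℕ} (hL : 3 ≤ L)
    (hmax : Maximal (fun H : SimpleGraph V => circumference H < L) G) {u v : V} (huv : u ≠ v)
    (hnadj : ¬ G.Adj u v) : G.degree u + G.degree v < Fintype.card V := by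
  set H := G ⊔ edge u v with hH
  have hG : circumference G < L := hmax.prop
  have hH_adj : ∀ {a b}, H.Adj a b → ¬ G.Adj a b → s(a, b) = s(u, v) := by
    intro a b hab hGab
    simpa [hH, edge, hGab, hab.ne] using hab
  have hLH : L ≤ circumference H := by
    by_contra! hlt
    exact hnadj (hmax.le_of_ge hlt le_sup_left (by simp [hH, edge, huv]))
  obtain ⟨p, hp⟩ := exists_isCycleSeq_circumference (G := H) (by omega)
  set l := circumference H
  obtain ⟨q, hq, hq_last⟩ : ∃ q, IsCycleSeq H l q ∧ ¬ G.Adj (q (l - 1)) (q 0) := by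
    by_contra! hG_last
    have hpG : IsCycleSeq G l p := by
      refine ⟨hp.toIsPathSeq.map_graph fun i hi _ => ?_, hp.three_le, hG_last p hp⟩
      have := hG_last _ (hp.rotate (i + 1))
      rwa [show l - 1 + (i + 1) = i + l by omega, Nat.add_mod_right, Nat.zero_add,
        Nat.mod_eq_of_lt hi, Nat.mod_eq_of_lt (by omega)] at this
    exact (hpG.le_circumference.trans_lt hG).not_ge hLH
  have hedge := hH_adj hq.adj_last hq_last
  have hqG : IsPathSeq G l q := hq.toIsPathSeq.map_graph fun i hi hadj => by
    by_contra hnot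
    have hsame := (hH_adj hadj hnot).trans hedge.symm
    rw [Sym2.eq_iff, hq.inj (by omega) (by omega), hq.inj (by omega) (by omega),
      hq.inj (by omega) (by omega), hq.inj (by omega) (by omega)] at hsame
    omega
  have hdeg := hqG.degree_add_degree_lt (by omega) (by omega)
  rcases Sym2.eq_iff.1 hedge with ⟨h1, h2⟩ | ⟨h1, h2⟩ <;> rw [h1, h2] at hdeg <;> omega

end Ore

/-! ### Lengthening a clique to a long cycle -/

section Clique

theorem isCycleSeq_getD {V : Type*} {G : SimpleGraph V} {a : V} {M : List V}
    (hlen : 3 ≤ (a :: M).length) (hnodup : (a :: M).Nodup) (hchain : (a :: M).IsChain G.Adj)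
    (hlast : G.Adj ((a :: M).getLast (List.cons_ne_nil a M)) a) :
    IsCycleSeq G (a :: M).length fun i => (a :: M).getD i a where
  injOn i hi j hj hij := by
    have hi : i < (a :: M).length := hi
    have hj : j < (a :: M).length := hj
    simp only [List.getD_eq_getElem _ _ hi, List.getD_eq_getElem _ _ hj] at hij
    exact hnodup.getElem_inj_iff.1 hij
  adj i hi := by
    rw [List.getD_eq_getElem _ _ hi, List.getD_eq_getElem _ _ (by omega)]
    exact List.isChain_iff_getElem.1 hchain i hi
  three_le := hlen
  adj_last := by
    rw [List.getLast_eq_getElem] at hlast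
    rwa [List.getD_eq_getElem _ _ (by simp), List.getD_cons_zero]

variable {V : Type} [Finite V] {G : SimpleGraph V} {A : Finset V}

/-- Close the path up through the vertices of the clique which it misses. -/
theorem card_add_card_le_circumference_of_isPath (hA : G.IsClique A) (hcard : 3 ≤ #A) {a b : V}
    (ha : a ∈ A) (hb : b ∈ A) (hab : a ≠ b) {w : G.Walk a b} (hw : w.IsPath) {T : Finset V}
    (hT : ∀ t ∈ T, t ∈ w.support) (hAT : Disjoint A T) : #A + #T ≤ circumference G := by
  classical
  obtain ⟨Q, hQ⟩ : ∃ Q, w.support = a :: Q := ⟨_, w.cons_tail_support.symm⟩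
  set R := (A \ w.support.toFinset).toList with hR
  have mem_R : ∀ {x}, x ∈ R ↔ x ∈ A ∧ x ∉ w.support := by simp [hR]
  have hR_chain : R.IsChain G.Adj := by
    refine List.Pairwise.isChain ((nodup_toList _).imp_of_mem fun hx hy hxy => ?_)
    exact hA (mem_R.1 hx).1 (mem_R.1 hy).1 hxy
  have hnodup : (a :: (Q ++ R)).Nodup := by
    rw [← List.cons_append, ← hQ, List.nodup_append']
    exact ⟨hw.support_nodup, nodup_toList _, fun x hx hxR => (mem_R.1 hxR).2 hx⟩
  have hchain : (a :: (Q ++ R)).IsChain G.Adj := by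
    rw [← List.cons_append, ← hQ, List.isChain_append]
    refine ⟨w.isChain_adj_support, hR_chain, fun x hx y hy => ?_⟩
    have hxb : b = x := by simpa [List.getLast?_eq_some_getLast w.support_ne_nil] using hx
    have hyR := mem_R.1 (List.mem_of_mem_head? hy)
    exact hxb ▸ hA hb hyR.1 (ne_of_mem_of_not_mem w.end_mem_support hyR.2)
  have hlast : G.Adj ((a :: (Q ++ R)).getLast (List.cons_ne_nil _ _)) a := by
    simp only [← List.cons_append, ← hQ]
    by_cases hRnil : R = []
    · simpa [hRnil] using hA hb ha hab.symm
    · rw [List.getLast_append_of_ne_nil _ hRnil]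
      have hlastR := mem_R.1 (List.getLast_mem hRnil)
      exact hA hlastR.1 ha (ne_of_mem_of_not_mem w.start_mem_support hlastR.2).symm
  have hsub : A ∪ T ⊆ (a :: (Q ++ R)).toFinset := by
    intro x hx
    rw [List.mem_toFinset, ← List.cons_append, ← hQ, List.mem_append]
    rcases mem_union.1 hx with hxA | hxT
    · exact or_iff_not_imp_left.2 fun hxw => mem_R.2 ⟨hxA, hxw⟩
    · exact Or.inl (hT x hxT)
  have hle := card_le_card hsub
  rw [List.toFinset_card_of_nodup hnodup, card_union_of_disjoint hAT] at hle
  have hlen := hcard.trans ((Nat.le_add_right _ _).trans hle)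
  exact hle.trans (isCycleSeq_getD hlen hnodup hchain hlast).le_circumference

end Clique

theorem card_le_circumference_of_isClique {V : Type} [Finite V] {G : SimpleGraph V} {A : Finset V}
    (hA : G.IsClique A) (hcard : 3 ≤ #A) : #A ≤ circumference G := by
  classical
  obtain ⟨a, ha, b, hb, hab⟩ := one_lt_card.1 (show 1 < #A by omega)
  exact card_add_card_le_circumference_of_isPath hA hcard ha hb hab
    (w := (hA ha hb hab).toWalk) (by simp [hab]) (T := ∅) (by simp) (disjoint_empty_right A)

section CliqueNeighbors

variable {V : Type} [Fintype V] [DecidableEq V] {G : SimpleGraph V} [DecidableRel G.Adj]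
  {A : Finset V} {u v : V}

theorem card_add_one_le_circumference (hA : G.IsClique A) (hcard : 3 ≤ #A) (hu : u ∉ A)
    (hu2 : 2 ≤ #(G.neighborFinset u ∩ A)) : #A + 1 ≤ circumference G := by
  obtain ⟨a, ha, b, hb, hab⟩ := one_lt_card.1 (show 1 < #(G.neighborFinset u ∩ A) from hu2)
  simp only [mem_inter, mem_neighborFinset] at ha hb
  exact card_add_card_le_circumference_of_isPath hA hcard ha.2 hb.2 hab (T := {u})
    (w := .cons ha.1.symm (.cons hb.1 .nil)) (by simp [hab, ha.1.ne', hb.1.ne]) (by simp)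
    (disjoint_singleton_right.2 hu)

theorem card_add_two_le_circumference_of_adj (hA : G.IsClique A) (hcard : 3 ≤ #A) (hu : u ∉ A)
    (hv : v ∉ A) (huv : G.Adj u v) (hu2 : 2 ≤ #(G.neighborFinset u ∩ A))
    (hv1 : 1 ≤ #(G.neighborFinset v ∩ A)) : #A + 2 ≤ circumference G := by
  obtain ⟨c, hc⟩ := card_pos.1 hv1
  obtain ⟨a, ha, hac⟩ := exists_mem_ne hu2 c
  simp only [mem_inter, mem_neighborFinset] at ha hc
  rw [← card_pair huv.ne]
  refine card_add_card_le_circumference_of_isPath hA hcard ha.2 hc.2 hac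
    (w := .cons ha.1.symm (.cons huv (.cons hc.1 .nil))) ?_ (by simp) (by simp [hu, hv])
  have := ne_of_mem_of_not_mem ha.2 hv
  have := (ne_of_mem_of_not_mem hc.2 hu).symm
  simp [*, ha.1.ne', hc.1.ne, huv.ne]

/-- If `u` and `v` have a common neighbour `b` in the clique, a path `a, u, b, v, d` with its ends
in the clique exists because `u` has a third neighbour `a`. -/
theorem card_add_two_le_circumference_of_two_lt (hA : G.IsClique A) (hcard : 3 ≤ #A)
    (hu : u ∉ A) (hv : v ∉ A) (huv : u ≠ v) (hu3 : 2 < #(G.neighborFinset u ∩ A))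
    (hv2 : 2 ≤ #(G.neighborFinset v ∩ A)) : #A + 2 ≤ circumference G := by
  have ne_v {x : V} (hx : x ∈ A) : x ≠ v := ne_of_mem_of_not_mem hx hv
  have u_ne {x : V} (hx : x ∈ A) : u ≠ x := (ne_of_mem_of_not_mem hx hu).symm
  rw [← card_pair huv]
  by_cases hdisj : Disjoint (G.neighborFinset u ∩ A) (G.neighborFinset v ∩ A)
  · obtain ⟨a, ha, b, hb, hab⟩ := one_lt_card.1 (show 1 < #(G.neighborFinset u ∩ A) by omega)
    obtain ⟨c, hc, d, hd, hcd⟩ := one_lt_card.1 (show 1 < #(G.neighborFinset v ∩ A) from hv2)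
    have hac := disjoint_iff_ne.1 hdisj a ha c hc
    have had := disjoint_iff_ne.1 hdisj a ha d hd
    have hbc := disjoint_iff_ne.1 hdisj b hb c hc
    have hbd := disjoint_iff_ne.1 hdisj b hb d hd
    simp only [mem_inter, mem_neighborFinset] at ha hb hc hd
    refine card_add_card_le_circumference_of_isPath hA hcard ha.2 hd.2 had
      (w := .cons ha.1.symm (.cons hb.1 (.cons (hA hb.2 hc.2 hbc)
        (.cons hc.1.symm (.cons hd.1 .nil))))) ?_ (by simp) (by simp [hu, hv])
    simp [*, ha.1.ne', hb.1.ne, hc.1.ne', hd.1.ne]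
  · obtain ⟨b, hub, hvb⟩ := not_disjoint_iff.1 hdisj
    obtain ⟨d, hd, hdb⟩ := exists_mem_ne hv2 b
    obtain ⟨a, ha, habd⟩ := exists_mem_notMem_of_card_lt_card
      ((card_le_two (a := b) (b := d)).trans_lt hu3)
    simp only [mem_inter, mem_neighborFinset, mem_insert, mem_singleton, not_or]
      at hub hvb hd ha habd
    refine card_add_card_le_circumference_of_isPath hA hcard ha.2 hd.2 habd.2
      (w := .cons ha.1.symm (.cons hub.1 (.cons hvb.1.symm (.cons hd.1 .nil)))) ?_ (by simp)
      (by simp [hu, hv])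
    simp [*, ha.1.ne', hub.1.ne, hvb.1.ne', hd.1.ne, hdb.symm]

end CliqueNeighbors

section OuterDegrees

variable {V : Type*} [Fintype V] [DecidableEq V] {G : SimpleGraph V} [DecidableRel G.Adj]

theorem sum_card_neighborFinset_inter_comm (A B : Finset V) :
    ∑ u ∈ A, #(G.neighborFinset u ∩ B) = ∑ v ∈ B, #(G.neighborFinset v ∩ A) := by
  have hfilter (v : V) (C : Finset V) : G.neighborFinset v ∩ C = {w ∈ C | G.Adj v w} := by
    ext; simp [and_comm]
  simp only [hfilter]
  simpa only [bipartiteAbove, bipartiteBelow, G.adj_comm] using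
    sum_card_bipartiteAbove_eq_sum_card_bipartiteBelow (s := A) (t := B) G.Adj

theorem card_neighborFinset_compl_inter_add {A : Finset V} {u : V} (hu : u ∉ A) :
    #(Gᶜ.neighborFinset u ∩ A) + #(G.neighborFinset u ∩ A) = #A := by
  rw [← card_union_of_disjoint, ← union_inter_distrib_right]
  · congr 1
    ext a
    have : a ∈ A → u ≠ a := fun ha h => hu (h ▸ ha)
    simp only [mem_inter, mem_union, mem_neighborFinset, compl_adj]
    tauto
  · refine disjoint_left.2 fun a ha ha' => ?_
    simp only [mem_inter, mem_neighborFinset, compl_adj] at ha ha'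
    exact ha.1.2 ha'.1

theorem card_compl_mul_le_card_edgeFinset_compl (A : Finset V) :
    #Aᶜ * (Fintype.card V - 1) + #Aᶜ * #A ≤
      2 * #Gᶜ.edgeFinset + ∑ u ∈ Aᶜ, (G.degree u + #(G.neighborFinset u ∩ A)) := by
  have houter : #Aᶜ * (Fintype.card V - 1) = ∑ u ∈ Aᶜ, (Gᶜ.degree u + G.degree u) := by
    rw [← smul_eq_mul, ← sum_const]
    refine sum_congr rfl fun u _ => ?_
    have := G.degree_compl u
    have := G.degree_lt_card_verts u
    omega
  have hcross : #Aᶜ * #A =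
      ∑ a ∈ A, #(Gᶜ.neighborFinset a ∩ Aᶜ) + ∑ u ∈ Aᶜ, #(G.neighborFinset u ∩ A) := by
    rw [sum_card_neighborFinset_inter_comm, ← sum_add_distrib, ← smul_eq_mul, ← sum_const]
    exact sum_congr rfl fun u hu =>
      (card_neighborFinset_compl_inter_add (mem_compl.1 hu)).symm
  have hinner : ∑ a ∈ A, #(Gᶜ.neighborFinset a ∩ Aᶜ) ≤ ∑ a ∈ A, Gᶜ.degree a :=
    sum_le_sum fun a _ => card_le_card inter_subset_left
  rw [← sum_degrees_eq_twice_card_edges, ← sum_add_sum_compl A, houter, hcross]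
  simp only [sum_add_distrib]
  omega

theorem degree_add_card_le_of_forall_not_adj {A B : Finset V} {u : V} (hB : B ⊆ Aᶜ)
    (hnadj : ∀ v ∈ B, ¬ G.Adj u v) :
    G.degree u + #B ≤ #Aᶜ + #(G.neighborFinset u ∩ A) := by
  rw [← card_neighborFinset_eq_degree, ← card_inter_add_card_sdiff _ A, add_assoc, add_comm,
    ← card_union_of_disjoint]
  · gcongr
    refine union_subset (fun v hv => ?_) hB
    exact mem_compl.2 (mem_sdiff.1 hv).2
  · exact disjoint_left.2 fun v hv hvB => hnadj v hvB (by simpa using (mem_sdiff.1 hv).1)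

theorem exists_isClique_forall_degree_le
    (hore : ∀ u v, u ≠ v → ¬ G.Adj u v → G.degree u + G.degree v < Fintype.card V) :
    ∃ A : Finset V, G.IsClique A ∧
      ∀ u ∉ A, 2 * G.degree u < Fintype.card V ∧ G.degree u ≤ #Aᶜ := by
  have hlarge : G.IsClique ({v | Fintype.card V ≤ 2 * G.degree v} : Finset V) := by
    intro u hu v hv huv
    by_contra hnadj
    have := hore u v huv hnadj
    simp only [coe_filter, mem_univ, true_and, Set.mem_ofPred_eq] at hu hv
    omega
  obtain ⟨A, hlargeA, hA⟩ := Finite.exists_le_maximal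
    (p := fun B : Finset V => G.IsClique (B : Set V)) hlarge
  refine ⟨A, hA.prop, fun u hu => ⟨?_, ?_⟩⟩
  · by_contra! hcon
    exact hu (hlargeA (by simpa using hcon))
  · obtain ⟨v, hv, hnadj⟩ : ∃ v ∈ A, ¬ G.Adj u v := by
      by_contra! hadj
      have hins : G.IsClique (insert u A : Finset V) := by
        rw [coe_insert, isClique_insert]
        exact ⟨hA.prop, fun v hv _ => hadj v hv⟩
      exact hu (hA.le_of_ge hins (subset_insert u A) (mem_insert_self u A))
    have hsub : A.erase v ⊆ G.neighborFinset v := fun w hw =>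
      (mem_neighborFinset ..).2 (hA.prop hv (mem_of_mem_erase hw) (ne_of_mem_erase hw).symm)
    have hdeg := card_le_card hsub
    rw [card_erase_of_mem hv, card_neighborFinset_eq_degree] at hdeg
    have := hore u v (fun h => hu (h ▸ hv)) hnadj
    have := card_pos.2 ⟨v, hv⟩
    have := card_add_card_compl A
    omega

end OuterDegrees

section OuterDegreeSum

variable {V : Type} [Fintype V] [DecidableEq V] {G : SimpleGraph V} [DecidableRel G.Adj]
  {A : Finset V}

/-- The vertices outside `A` with at least two neighbours in `A`: each of them can be inserted into
a cycle spanning the clique `A`. -/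
def attachedTwice (G : SimpleGraph V) [DecidableRel G.Adj] (A : Finset V) : Finset V :=
  {u ∈ Aᶜ | 2 ≤ #(G.neighborFinset u ∩ A)}

theorem mem_attachedTwice {u : V} :
    u ∈ attachedTwice G A ↔ u ∉ A ∧ 2 ≤ #(G.neighborFinset u ∩ A) := by
  simp [attachedTwice]

theorem attachedTwice_subset : attachedTwice G A ⊆ Aᶜ := filter_subset _ _

theorem degree_add_card_inter_le_of_notMem_attachedTwice (hA : G.IsClique A) (hcard : 3 ≤ #A)
    (hcirc : circumference G < #A + 2) {u : V} (hu : u ∉ A) (huT : u ∉ attachedTwice G A) :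
    G.degree u + #(G.neighborFinset u ∩ A) + min #(attachedTwice G A) 2 ≤ #Aᶜ + 1 := by
  have hx : #(G.neighborFinset u ∩ A) ≤ 1 := by
    by_contra! hx
    exact huT (mem_attachedTwice.2 ⟨hu, hx⟩)
  obtain hx | hx := Nat.le_one_iff_eq_zero_or_eq_one.1 hx
  · have := degree_add_card_le_of_forall_not_adj (G := G) (B := {u}) (A := A) (u := u)
      (by simpa using hu) (by simp)
    rw [card_singleton] at this
    omega
  · have hnadj : ∀ v ∈ insert u (attachedTwice G A), ¬ G.Adj u v := by
      refine (forall_mem_insert ..).2 ⟨G.irrefl, fun v hv huv => ?_⟩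
      obtain ⟨hvA, hv2⟩ := mem_attachedTwice.1 hv
      have := card_add_two_le_circumference_of_adj hA hcard hvA hu huv.symm hv2 hx.ge
      omega
    have := degree_add_card_le_of_forall_not_adj
      (insert_subset (mem_compl.2 hu) attachedTwice_subset) hnadj
    rw [card_insert_of_notMem huT] at this
    omega

theorem degree_add_card_inter_le_of_mem_attachedTwice (hA : G.IsClique A) (hcard : 3 ≤ #A)
    (hcirc : circumference G < #A + 2) (hT : 1 < #(attachedTwice G A)) {u : V}
    (hu : u ∈ attachedTwice G A) :
    G.degree u + #(G.neighborFinset u ∩ A) + #(attachedTwice G A) ≤ #Aᶜ + 4 := by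
  obtain ⟨huA, hu2⟩ := mem_attachedTwice.1 hu
  have hnadj : ∀ v ∈ attachedTwice G A, ¬ G.Adj u v := by
    intro v hv huv
    obtain ⟨hvA, hv2⟩ := mem_attachedTwice.1 hv
    have := card_add_two_le_circumference_of_adj hA hcard huA hvA huv hu2 (by omega)
    omega
  have hx : #(G.neighborFinset u ∩ A) ≤ 2 := by
    by_contra! hx
    obtain ⟨v, hv, hvu⟩ := exists_mem_ne hT u
    obtain ⟨hvA, hv2⟩ := mem_attachedTwice.1 hv
    have := card_add_two_le_circumference_of_two_lt hA hcard huA hvA hvu.symm hx hv2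
    omega
  have := degree_add_card_le_of_forall_not_adj attachedTwice_subset hnadj
  omega

theorem sum_degree_add_card_inter_le (hA : G.IsClique A) (hcard : 3 ≤ #A)
    (hcirc : circumference G < #A + 2) (hdeg : ∀ u ∉ A, G.degree u ≤ #Aᶜ) :
    ∑ u ∈ Aᶜ, (G.degree u + #(G.neighborFinset u ∩ A)) ≤ #Aᶜ * (#Aᶜ + 1) + 2 := by
  set s := #Aᶜ
  set t := #(attachedTwice G A)
  obtain ⟨r, hr⟩ : ∃ r, s = t + r := Nat.exists_eq_add_of_le (card_le_card attachedTwice_subset)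
  have hlight : ∑ u ∈ Aᶜ \ attachedTwice G A, (G.degree u + #(G.neighborFinset u ∩ A)) ≤
      r * (s + 1 - min t 2) := by
    have hr' : #(Aᶜ \ attachedTwice G A) = r := by
      rw [card_sdiff_of_subset attachedTwice_subset]
      omega
    rw [← hr', ← smul_eq_mul]
    refine sum_le_card_nsmul _ _ _ fun u hu => Nat.le_sub_of_add_le ?_
    rw [mem_sdiff, mem_compl] at hu
    exact degree_add_card_inter_le_of_notMem_attachedTwice hA hcard hcirc hu.1 hu.2
  have hheavy {c : ℕ}
      (hc : ∀ u ∈ attachedTwice G A, G.degree u + #(G.neighborFinset u ∩ A) ≤ c) :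
      ∑ u ∈ attachedTwice G A, (G.degree u + #(G.neighborFinset u ∩ A)) ≤ t * c :=
    sum_le_card_nsmul _ _ _ hc
  rw [← sum_sdiff (attachedTwice_subset (G := G))]
  rcases le_or_gt t 1 with ht | ht
  · refine (add_le_add hlight (hheavy (c := 2 * s) fun u hu => ?_)).trans ?_
    · have := hdeg u (mem_attachedTwice.1 hu).1
      have : #(G.neighborFinset u ∩ A) ≤ G.degree u := card_le_card inter_subset_left
      omega
    · rw [min_eq_left (by omega), hr, show t + r + 1 - t = r + 1 by omega]
      nlinarith [Nat.mul_le_mul_left t ht]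
  · refine (add_le_add hlight (hheavy (c := r + 4) fun u hu => ?_)).trans ?_
    · have : _ + t ≤ s + 4 :=
        degree_add_card_inter_le_of_mem_attachedTwice hA hcard hcirc ht hu
      omega
    · obtain ⟨t', ht'⟩ := Nat.exists_eq_add_of_le' (show 2 ≤ t from ht)
      rw [min_eq_right (show 2 ≤ t from ht), show s + 1 - 2 = t' + r + 1 by omega, hr, ht']
      nlinarith [Nat.le_mul_self t']

end OuterDegreeSum

section NearlyComplete

variable {V : Type} [Fintype V] [DecidableEq V] {G : SimpleGraph V} [DecidableRel G.Adj]
  {A : Finset V} {k : ℕ}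

theorem card_compl_lt_of_forall_two_mul_degree_lt
    (he : #Gᶜ.edgeFinset < k * (Fintype.card V - 1))
    (hdeg : ∀ u ∉ A, 2 * G.degree u < Fintype.card V) : #Aᶜ < 4 * k := by
  have hcompl : ∀ u ∈ Aᶜ, Fintype.card V - 1 ≤ 2 * Gᶜ.degree u := by
    intro u hu
    have := hdeg u (mem_compl.1 hu)
    rw [G.degree_compl]
    omega
  have hsum := card_nsmul_le_sum _ _ _ hcompl
  have hle : ∑ u ∈ Aᶜ, Gᶜ.degree u ≤ ∑ u, Gᶜ.degree u :=
    sum_le_univ_sum_of_nonneg fun _ => Nat.zero_le _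
  rw [sum_degrees_eq_twice_card_edges] at hle
  rw [smul_eq_mul, ← mul_sum] at hsum
  refine lt_of_mul_lt_mul_right (a := Fintype.card V - 1) ?_ (Nat.zero_le _)
  linarith

theorem two_mul_mul_pred_le {k n s : ℤ} (hn1 : 15 * k + 7 ≤ 2 * n)
    (hn2 : 3 * k ^ 2 + 11 * k + 14 ≤ 4 * n) (hks : k + 2 ≤ s) (hsk : s ≤ 4 * k) :
    2 * k * (n - 1) ≤ s * (2 * n - 3 * s - 1) := by
  nlinarith [mul_nonneg (sub_nonneg.2 hks) (sub_nonneg.2 hsk),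
    mul_nonneg (sub_nonneg.2 hks) (sub_nonneg.2 hn1)]

theorem card_compl_le_succ (hn1 : 6 * k + 11 ≤ Fintype.card V)
    (hn2 : k ^ 2 + 2 * k + 3 ≤ Fintype.card V) (he : #Gᶜ.edgeFinset < k * (Fintype.card V - 1))
    (hdeg : ∀ u ∉ A, 2 * G.degree u < Fintype.card V ∧ G.degree u ≤ #Aᶜ) : #Aᶜ ≤ k + 1 := by
  by_contra! hks
  have hs4 := card_compl_lt_of_forall_two_mul_degree_lt he fun u hu => (hdeg u hu).1
  have hcount := card_compl_mul_le_card_edgeFinset_compl (G := G) A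
  have hsum : ∑ u ∈ Aᶜ, (G.degree u + #(G.neighborFinset u ∩ A)) ≤ #Aᶜ * (2 * #Aᶜ) := by
    refine sum_le_card_nsmul _ _ _ fun u hu => ?_
    have := (hdeg u (mem_compl.1 hu)).2
    have : #(G.neighborFinset u ∩ A) ≤ G.degree u := card_le_card inter_subset_left
    omega
  have hcard := card_add_card_compl A
  generalize #Aᶜ = s at *
  generalize Fintype.card V = n at *
  obtain ⟨N, rfl⟩ := Nat.exists_eq_add_of_le' (show 1 ≤ n by omega)
  rw [Nat.add_sub_cancel] at he hcount
  have harith := two_mul_mul_pred_le (k := k) (n := (N + 1 : ℕ)) (s := s)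
    (by rcases le_or_gt k 5 <;> (norm_cast; nlinarith))
    (by rcases le_or_gt k 3 <;> (norm_cast; nlinarith))
    (by omega) (by omega)
  zify at *
  nlinarith

theorem card_compl_ne_succ (hcard : 3 ≤ #A) (hn2 : k ^ 2 + 2 * k + 3 ≤ Fintype.card V)
    (he : #Gᶜ.edgeFinset < k * (Fintype.card V - 1)) (hA : G.IsClique A)
    (hcirc : circumference G < Fintype.card V - k + 1) (hdeg : ∀ u ∉ A, G.degree u ≤ #Aᶜ) :
    #Aᶜ ≠ k + 1 := by
  intro hk
  have hcount := card_compl_mul_le_card_edgeFinset_compl (G := G) A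
  have hA_card := card_add_card_compl A
  have hsum := sum_degree_add_card_inter_le hA hcard (by omega) hdeg
  rw [hk] at hcount hsum hA_card
  obtain ⟨N, hN⟩ := Nat.exists_eq_add_of_le' (show 1 ≤ Fintype.card V by omega)
  rw [hN, Nat.add_sub_cancel] at he hcount
  nlinarith

theorem exists_card_eq_forall_card_inter_le_one (hn1 : 6 * k + 11 ≤ Fintype.card V)
    (hn2 : k ^ 2 + 2 * k + 3 ≤ Fintype.card V) (he : #Gᶜ.edgeFinset < k * (Fintype.card V - 1))
    (hG : Maximal (fun H : SimpleGraph V => circumference H < Fintype.card V - k + 1) G) :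
    ∃ K : Finset V, #K = Fintype.card V - k ∧ ∀ u ∉ K, #(G.neighborFinset u ∩ K) ≤ 1 := by
  obtain ⟨A, hA, hdeg⟩ := exists_isClique_forall_degree_le fun u v huv hnadj =>
    degree_add_degree_lt_of_maximal_circumference_lt (by omega) hG huv hnadj
  have hs4 := card_compl_lt_of_forall_two_mul_degree_lt he fun u hu => (hdeg u hu).1
  have hA_card := card_add_card_compl A
  have hcard : 3 ≤ #A := by omega
  have hlower := (card_le_circumference_of_isClique hA hcard).trans_lt hG.prop
  have hupper := card_compl_le_succ hn1 hn2 he hdeg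
  have hne := card_compl_ne_succ hcard hn2 he hA hG.prop fun u hu => (hdeg u hu).2
  refine ⟨A, by omega, fun u hu => ?_⟩
  by_contra! hu2
  have := (card_add_one_le_circumference hA hcard hu hu2).trans_lt hG.prop
  omega

end NearlyComplete

/-! ### The signless Laplacian -/

section SignlessLaplacian

variable {V : Type*} [Fintype V] [DecidableEq V]

/-- The signless Laplacian matrix `D(G) + A(G)`. -/
def signlessLaplacian (G : SimpleGraph V) [DecidableRel G.Adj] : Matrix V V ℝ :=
  G.degMatrix ℝ + G.adjMatrix ℝ

variable {G H : SimpleGraph V} [DecidableRel G.Adj] [DecidableRel H.Adj] {x : V → ℝ}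

theorem isHermitian_signlessLaplacian : (signlessLaplacian G).IsHermitian :=
  (isHermitian_degMatrix ..).add (isHermitian_adjMatrix ..)

theorem signlessLaplacian_mulVec_apply (v : V) :
    (signlessLaplacian G *ᵥ x) v = G.degree v * x v + ∑ u ∈ G.neighborFinset v, x u := by
  rw [signlessLaplacian, add_mulVec, Pi.add_apply, degMatrix_mulVec_apply, adjMatrix_mulVec_apply]

theorem dotProduct_signlessLaplacian_mulVec :
    x ⬝ᵥ signlessLaplacian G *ᵥ x = (∑ u, ∑ v, if G.Adj u v then (x u + x v) ^ 2 else 0) / 2 := by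
  have hsymm : ∑ u, ∑ v, (if G.Adj u v then x v * x v else 0) =
      ∑ u, ∑ v, if G.Adj u v then x u * x u else 0 := by
    rw [sum_comm]
    simp only [G.adj_comm]
  have hsquare (u v : V) : (if G.Adj u v then (x u + x v) ^ 2 else 0) =
      2 * (if G.Adj u v then x u * x v else 0) + (if G.Adj u v then x u * x u else 0) +
        if G.Adj u v then x v * x v else 0 := by
    split_ifs <;> ring
  rw [signlessLaplacian, add_mulVec, dotProduct_add, dotProduct_mulVec_degMatrix,
    dotProduct_mulVec_adjMatrix]
  simp only [hsquare, sum_add_distrib, hsymm, ← mul_sum, degree_eq_sum_if_adj, sum_mul, ite_mul,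
    one_mul, zero_mul]
  ring

theorem dotProduct_signlessLaplacian_mulVec_mono (hGH : G ≤ H) (x : V → ℝ) :
    x ⬝ᵥ signlessLaplacian G *ᵥ x ≤ x ⬝ᵥ signlessLaplacian H *ᵥ x := by
  simp only [dotProduct_signlessLaplacian_mulVec]
  gcongr with u _ v _
  by_cases huv : G.Adj u v
  · simp [huv, hGH huv]
  · split_ifs <;> positivity

theorem eq_of_dotProduct_signlessLaplacian_mulVec_eq (hGH : G ≤ H) (hx : ∀ v, 0 < x v)
    (heq : x ⬝ᵥ signlessLaplacian G *ᵥ x = x ⬝ᵥ signlessLaplacian H *ᵥ x) : G = H := by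
  have hle (u v : V) : (if G.Adj u v then (x u + x v) ^ 2 else 0) ≤
      if H.Adj u v then (x u + x v) ^ 2 else 0 := by
    by_cases huv : G.Adj u v
    · simp [huv, hGH huv]
    · split_ifs <;> positivity
  simp only [dotProduct_signlessLaplacian_mulVec, div_left_inj' (two_ne_zero' ℝ)] at heq
  refine le_antisymm hGH fun u v huv => ?_
  have hrow := (sum_eq_sum_iff_of_le fun u _ => sum_le_sum fun v _ => hle u v).1 heq u (mem_univ u)
  have hterm := (sum_eq_sum_iff_of_le fun v _ => hle u v).1 hrow v (mem_univ v)
  by_contra hnadj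
  have := hx u
  have := hx v
  rw [if_neg hnadj, if_pos huv] at hterm
  exact (show 0 < (x u + x v) ^ 2 by positivity).ne hterm

/-- A nonnegative eigenvector vanishing at `u` vanishes at all neighbours of `u`. -/
theorem pos_of_signlessLaplacian_mulVec_eq {c : ℝ} (hG : G.Connected) (hx : ∀ v, 0 ≤ x v)
    (hx0 : x ≠ 0) (heig : signlessLaplacian G *ᵥ x = c • x) (v : V) : 0 < x v := by
  have hadj {u w : V} (huw : G.Adj u w) (hu : x u = 0) : x w = 0 := by
    have hsum := congrFun heig u
    rw [signlessLaplacian_mulVec_apply, Pi.smul_apply, hu, mul_zero, smul_zero, zero_add,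
      sum_eq_zero_iff_of_nonneg fun v _ => hx v] at hsum
    exact hsum w (by simpa using huw)
  refine (hx v).lt_of_ne' fun hv => hx0 (funext fun w => ?_)
  obtain ⟨p⟩ := hG.preconnected v w
  induction p with
  | nil => exact hv
  | cons huw _ ih => exact ih (hadj huw hv)

/-- If the closed neighbourhoods satisfy `N[a] ⊂ N[b]` and `x a = x b`, the eigenvalue equations at
`a` and `b` would give the same sum of `x` over `N[a]` and over `N[b]`. -/
theorem ne_of_signlessLaplacian_mulVec_eq {c : ℝ} (hx : ∀ v, 0 < x v)
    (heig : signlessLaplacian G *ᵥ x = c • x) {a b : V}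
    (hab : insert a (G.neighborFinset a) ⊂ insert b (G.neighborFinset b)) : x a ≠ x b := by
  intro heq
  have hclosed (v : V) : ∑ u ∈ insert v (G.neighborFinset v), (x v + x u) = (c + 2) * x v := by
    have := congrFun heig v
    rw [signlessLaplacian_mulVec_apply, Pi.smul_apply, smul_eq_mul] at this
    rw [sum_insert (by simp), sum_add_distrib, sum_const, card_neighborFinset_eq_degree,
      nsmul_eq_mul]
    linarith
  have hlt : ∑ u ∈ insert a (G.neighborFinset a), (x b + x u) <
      ∑ u ∈ insert b (G.neighborFinset b), (x b + x u) := by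
    obtain ⟨u, hub, hua⟩ := exists_of_ssubset hab
    exact sum_lt_sum_of_subset hab.subset hub hua (add_pos (hx b) (hx u))
      fun u _ _ => (add_pos (hx b) (hx u)).le
  rw [hclosed b, ← heq, hclosed a] at hlt
  exact hlt.false

end SignlessLaplacian

section SpectralRadius

variable {V : Type} [Fintype V] [DecidableEq V] (G : SimpleGraph V) [DecidableRel G.Adj]

theorem qSpecRad_eq_sSup_spectrum : qSpecRad G = sSup (spectrum ℝ (signlessLaplacian G)) := by
  have hdeg (v : V) : degCount G v = G.degree v := by
    rw [degCount, Nat.card_eq_fintype_card, card_neighborSet_eq_degree]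
  simp only [qSpecRad, signlessLaplacian, degMatrix, hdeg]
  congr!

theorem posSemidef_qSpecRad_sub_signlessLaplacian :
    (algebraMap ℝ (Matrix V V ℝ) (qSpecRad G) - signlessLaplacian G).PosSemidef := by
  rw [posSemidef_iff_isHermitian_and_spectrum_nonneg]
  refine ⟨.sub ?_ isHermitian_signlessLaplacian, ?_⟩
  · rw [algebraMap_eq_diagonal]
    exact isHermitian_diagonal _
  · rw [← spectrum.singleton_sub_eq, Set.singleton_sub]
    rintro _ ⟨c, hc, rfl⟩
    rw [qSpecRad_eq_sSup_spectrum]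
    exact sub_nonneg.2 (le_csSup finite_real_spectrum.bddAbove hc)

variable {G} (x : V → ℝ)

theorem dotProduct_qSpecRad_sub_signlessLaplacian_mulVec :
    x ⬝ᵥ (algebraMap ℝ (Matrix V V ℝ) (qSpecRad G) - signlessLaplacian G) *ᵥ x =
      qSpecRad G * (x ⬝ᵥ x) - x ⬝ᵥ signlessLaplacian G *ᵥ x := by
  rw [sub_mulVec, dotProduct_sub, Algebra.algebraMap_eq_smul_one, smul_mulVec, one_mulVec,
    dotProduct_smul, smul_eq_mul]

theorem dotProduct_signlessLaplacian_mulVec_le :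
    x ⬝ᵥ signlessLaplacian G *ᵥ x ≤ qSpecRad G * (x ⬝ᵥ x) := by
  have := (posSemidef_qSpecRad_sub_signlessLaplacian G).dotProduct_mulVec_nonneg x
  rwa [star_trivial, dotProduct_qSpecRad_sub_signlessLaplacian_mulVec, sub_nonneg] at this

variable {x}

theorem signlessLaplacian_mulVec_eq_of_le
    (hx : qSpecRad G * (x ⬝ᵥ x) ≤ x ⬝ᵥ signlessLaplacian G *ᵥ x) :
    signlessLaplacian G *ᵥ x = qSpecRad G • x := by
  have := ((posSemidef_qSpecRad_sub_signlessLaplacian G).dotProduct_mulVec_zero_iff x).1 <| by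
    rw [star_trivial, dotProduct_qSpecRad_sub_signlessLaplacian_mulVec, sub_eq_zero]
    exact hx.antisymm (dotProduct_signlessLaplacian_mulVec_le x)
  rw [sub_mulVec, Algebra.algebraMap_eq_smul_one, smul_mulVec, one_mulVec, sub_eq_zero] at this
  exact this.symm

variable (G) [Nonempty V]

theorem exists_signlessLaplacian_mulVec_eq_qSpecRad_smul :
    ∃ x ≠ 0, signlessLaplacian G *ᵥ x = qSpecRad G • x := by
  have hne : (spectrum ℝ (signlessLaplacian G)).Nonempty := by
    rw [isHermitian_signlessLaplacian.spectrum_real_eq_range_eigenvalues]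
    exact Set.range_nonempty _
  have hmem := hne.csSup_mem finite_real_spectrum
  rw [← qSpecRad_eq_sSup_spectrum, ← spectrum_toLin', ← Module.End.hasEigenvalue_iff_mem_spectrum]
    at hmem
  obtain ⟨x, hx⟩ := hmem.exists_hasEigenvector
  exact ⟨x, hx.2, by simpa using hx.apply_eq_smul⟩

theorem exists_nonneg_signlessLaplacian_mulVec_eq_qSpecRad_smul :
    ∃ x ≠ 0, (∀ v, 0 ≤ x v) ∧ signlessLaplacian G *ᵥ x = qSpecRad G • x := by
  obtain ⟨x, hx0, hx⟩ := exists_signlessLaplacian_mulVec_eq_qSpecRad_smul G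
  refine ⟨|x|, by simpa [funext_iff] using hx0, fun v => abs_nonneg _,
    signlessLaplacian_mulVec_eq_of_le ?_⟩
  have habs : |x| ⬝ᵥ |x| = x ⬝ᵥ x := by simp [dotProduct]
  rw [habs, ← smul_eq_mul, ← dotProduct_smul, ← hx]
  simp only [dotProduct_signlessLaplacian_mulVec, Pi.abs_apply]
  gcongr with u _ v _
  split_ifs
  · exact sq_le_sq.2 ((abs_add_le _ _).trans (le_abs_self _))
  · exact le_rfl

end SpectralRadius

theorem qSpecRad_eq_of_iso {V W : Type} [Finite V] [Finite W] {G : SimpleGraph V}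
    {H : SimpleGraph W} (e : G ≃g H) : qSpecRad G = qSpecRad H := by
  classical
  cases nonempty_fintype V
  cases nonempty_fintype W
  have hreindex : signlessLaplacian H =
      reindexAlgEquiv ℝ ℝ e.toEquiv (signlessLaplacian G) := by
    ext u v
    have hadj : G.Adj (e.toEquiv.symm u) (e.toEquiv.symm v) ↔ H.Adj u v := e.symm.map_adj_iff
    have hdegree : G.degree (e.toEquiv.symm u) = H.degree u := e.symm.degree_eq u
    simp [signlessLaplacian, degMatrix, diagonal_apply, adjMatrix_apply, hadj, hdegree]
  rw [qSpecRad_eq_sSup_spectrum, qSpecRad_eq_sSup_spectrum, hreindex, AlgEquiv.spectrum_eq]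

section SpectralBounds

variable {V : Type} [Fintype V] {G : SimpleGraph V}

theorem two_mul_card_sub_one_lt_qSpecRad {K : Finset V} (hG : G.Connected) (hK : G.IsClique K)
    (hne : K.Nonempty) (huniv : K ≠ univ) : 2 * ((#K : ℝ) - 1) < qSpecRad G := by
  classical
  set z : V → ℝ := fun v => if v ∈ K then 1 else 0 with hz
  have hzz : z ⬝ᵥ z = #K := by simp [hz, dotProduct]
  have hrow : ∀ v ∈ K, 2 * ((#K : ℝ) - 1) ≤ (signlessLaplacian G *ᵥ z) v := by
    intro v hv
    have hsub : K.erase v ⊆ G.neighborFinset v ∩ K := fun u hu => mem_inter.2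
      ⟨(mem_neighborFinset ..).2 (hK hv (mem_of_mem_erase hu) (ne_of_mem_erase hu).symm),
        mem_of_mem_erase hu⟩
    have hcard : #K ≤ #(G.neighborFinset v ∩ K) + 1 := by
      rw [← card_erase_add_one hv]
      gcongr
    have hdeg : #(G.neighborFinset v ∩ K) ≤ G.degree v := card_le_card inter_subset_left
    rify at hcard hdeg
    have hsum : (signlessLaplacian G *ᵥ z) v = G.degree v + #(G.neighborFinset v ∩ K) := by
      simp [signlessLaplacian_mulVec_apply, hz, hv, sum_ite_mem]
    linarith
  have hform : 2 * ((#K : ℝ) - 1) * #K ≤ z ⬝ᵥ signlessLaplacian G *ᵥ z := by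
    have hsum : z ⬝ᵥ signlessLaplacian G *ᵥ z = ∑ v ∈ K, (signlessLaplacian G *ᵥ z) v := by
      simp [hz, dotProduct, ite_mul]
    rw [hsum, mul_comm, ← nsmul_eq_mul]
    exact card_nsmul_le_sum _ _ _ hrow
  by_contra! hle
  obtain ⟨v, hv⟩ := hne
  obtain ⟨u, hu⟩ := not_forall.1 fun h => huniv (eq_univ_of_forall h)
  have heig := signlessLaplacian_mulVec_eq_of_le (x := z) <| by
    rw [hzz]
    exact (mul_le_mul_of_nonneg_right hle (Nat.cast_nonneg _)).trans hform
  have hpos := pos_of_signlessLaplacian_mulVec_eq hG (fun v => by simp only [hz]; positivity)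
    (fun h => by simpa [hz, hv] using congrFun h v) heig u
  simp [hz, hu] at hpos

variable [DecidableEq V] [DecidableRel G.Adj]

/-- Merris' bound, at a vertex maximizing `|x v| / d(v)`. -/
theorem exists_mul_degree_le_sum_degree {c : ℝ} {x : V → ℝ} (hc : 0 < c) (hx0 : x ≠ 0)
    (heig : signlessLaplacian G *ᵥ x = c • x) :
    ∃ v, 0 < G.degree v ∧
      c * G.degree v ≤ (G.degree v : ℝ) ^ 2 + ∑ u ∈ G.neighborFinset v, (G.degree u : ℝ) := by
  have hrow (v : V) : c * x v = G.degree v * x v + ∑ u ∈ G.neighborFinset v, x u := by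
    rw [← signlessLaplacian_mulVec_apply, heig, Pi.smul_apply, smul_eq_mul]
  have hisolated (v : V) (hv : G.degree v = 0) : x v = 0 := by
    have hempty := card_eq_zero.1 ((G.card_neighborFinset_eq_degree v).trans hv)
    simpa [hv, hempty, hc.ne'] using hrow v
  obtain ⟨w, hw⟩ := Function.ne_iff.1 hx0
  have hdw : 0 < G.degree w := Nat.pos_of_ne_zero fun h => hw (hisolated w h)
  obtain ⟨v, -, hv⟩ := exists_max_image univ (fun u => |x u| / G.degree u) ⟨w, mem_univ w⟩
  set M := |x v| / G.degree v with hM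
  have hMpos : 0 < M :=
    (div_pos (abs_pos.2 hw) (Nat.cast_pos.2 hdw)).trans_le (hv w (mem_univ w))
  have hdv : 0 < G.degree v := Nat.pos_of_ne_zero fun h => by simp [hM, h] at hMpos
  have hxM (u : V) : |x u| ≤ M * G.degree u := by
    rcases (G.degree u).eq_zero_or_pos with h | h
    · simp [h, hisolated u h]
    · exact (div_le_iff₀ (Nat.cast_pos.2 h)).1 (hv u (mem_univ u))
  refine ⟨v, hdv, le_of_mul_le_mul_left ?_ hMpos⟩
  calc M * (c * G.degree v) = c * |x v| := by
        rw [hM]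
        field_simp
    _ = |G.degree v * x v + ∑ u ∈ G.neighborFinset v, x u| := by
        rw [← hrow, abs_mul, abs_of_pos hc]
    _ ≤ G.degree v * |x v| + ∑ u ∈ G.neighborFinset v, |x u| := by
        refine (abs_add_le _ _).trans (add_le_add ?_ (abs_sum_le_sum_abs _ _))
        rw [abs_mul, Nat.abs_cast]
    _ ≤ G.degree v * (M * G.degree v) + ∑ u ∈ G.neighborFinset v, M * G.degree u := by
        gcongr with u
        exacts [hxM v, hxM u]
    _ = M * ((G.degree v : ℝ) ^ 2 + ∑ u ∈ G.neighborFinset v, (G.degree u : ℝ)) := by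
        rw [← mul_sum]
        ring

end SpectralBounds

section DegreeSums

variable {V : Type*} [Fintype V] {G : SimpleGraph V} [DecidableRel G.Adj]

theorem sum_neighborFinset_degree_le [DecidableEq V] (v : V) :
    ∑ u ∈ G.neighborFinset v, G.degree u ≤ G.degree v ^ 2 +
      ∑ u ∈ G.neighborFinset v, #(G.neighborFinset u ∩ Gᶜ.neighborFinset v) := by
  rw [sq, ← smul_eq_mul, ← G.card_neighborFinset_eq_degree v, ← sum_const, ← sum_add_distrib]
  refine sum_le_sum fun u hu => ?_
  rw [← card_neighborFinset_eq_degree, ← card_inter_add_card_sdiff _ (Gᶜ.neighborFinset v),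
    add_comm]
  refine Nat.add_le_add_right ?_ _
  calc #(G.neighborFinset u \ Gᶜ.neighborFinset v)
      ≤ #(insert v ((G.neighborFinset v).erase u)) := by
        refine card_le_card fun w hw => ?_
        have : w = v ∨ v ≠ w := (eq_or_ne w v).imp_right Ne.symm
        simp only [mem_sdiff, mem_neighborFinset, compl_adj, mem_insert, mem_erase] at hw ⊢
        have := hw.1.ne'
        tauto
    _ ≤ #((G.neighborFinset v).erase u) + 1 := card_insert_le _ _
    _ = #(G.neighborFinset v) := card_erase_add_one hu

theorem degree_add_sum_degree_add_sum_degree [DecidableEq V] (v : V) :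
    G.degree v + ∑ u ∈ G.neighborFinset v, G.degree u + ∑ u ∈ Gᶜ.neighborFinset v, G.degree u =
      2 * #G.edgeFinset := by
  rw [← sum_degrees_eq_twice_card_edges, ← add_sum_erase univ _ (mem_univ v), add_assoc,
    ← sum_union]
  · congr 2
    ext u
    have : G.Adj v u → v ≠ u := Adj.ne
    simp only [mem_union, mem_neighborFinset, compl_adj, mem_erase, mem_univ, and_true, ne_comm]
    tauto
  · exact disjoint_left.2 fun u hu hu' => by
      rw [mem_neighborFinset] at hu hu'
      exact hu'.2 hu

theorem two_mul_card_edgeFinset_add_two_mul_card_edgeFinset_compl [DecidableEq V] :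
    2 * #G.edgeFinset + 2 * #Gᶜ.edgeFinset = Fintype.card V * (Fintype.card V - 1) := by
  rw [← sum_degrees_eq_twice_card_edges, ← sum_degrees_eq_twice_card_edges, ← sum_add_distrib,
    ← smul_eq_mul, ← card_univ, ← sum_const]
  refine sum_congr rfl fun v _ => ?_
  have := G.degree_lt_card_verts v
  rw [G.degree_compl, card_univ]
  omega

/-- Das' bound on the sum of the degree and the average neighbour degree of a vertex. -/
theorem pred_card_mul_le_degree_mul {v : V} (hv : 0 < G.degree v) :
    ((Fintype.card V : ℤ) - 1) *
        ((G.degree v : ℤ) ^ 2 + ∑ u ∈ G.neighborFinset v, (G.degree u : ℤ)) ≤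
      G.degree v * (2 * #G.edgeFinset +
        ((Fintype.card V : ℤ) - 1) * ((Fintype.card V : ℤ) - 2)) := by
  classical
  set Y := ∑ u ∈ G.neighborFinset v, #(G.neighborFinset u ∩ Gᶜ.neighborFinset v) with hY
  have hY_comm : Y = ∑ u ∈ Gᶜ.neighborFinset v, #(G.neighborFinset u ∩ G.neighborFinset v) :=
    sum_card_neighborFinset_inter_comm _ _
  have hnear := sum_neighborFinset_degree_le (G := G) v
  have hsum := degree_add_sum_degree_add_sum_degree (G := G) v
  have hfar : Y ≤ ∑ u ∈ Gᶜ.neighborFinset v, G.degree u := by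
    rw [hY_comm]
    exact sum_le_sum fun u _ => card_le_card inter_subset_left
  have hY_le : Y ≤ Gᶜ.degree v * G.degree v := by
    rw [hY_comm]
    exact sum_le_card_nsmul _ _ _ fun u _ => card_le_card inter_subset_right
  have hcard : (Fintype.card V : ℤ) = G.degree v + Gᶜ.degree v + 1 := by
    have := G.degree_compl v
    have := G.degree_lt_card_verts v
    omega
  rw [← hY] at hnear
  zify at *
  have hr : (0 : ℤ) ≤ Gᶜ.degree v := Nat.cast_nonneg _
  have hy : (0 : ℤ) ≤ Y := Nat.cast_nonneg _
  rw [hcard]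
  generalize (G.degree v : ℤ) = d at *
  generalize (Gᶜ.degree v : ℤ) = r at *
  generalize (Y : ℤ) = y at *
  have hcross : (r - d) * y ≤ d * r * (r - 1) := by
    rcases le_or_gt r d with hrd | hrd
    · have : 0 ≤ r * (r - 1) := by
        rcases hr.eq_or_lt with rfl | hr
        · simp
        · exact mul_nonneg hr.le (by omega)
      nlinarith [mul_nonneg (sub_nonneg.2 hrd) hy]
    · nlinarith [mul_le_mul_of_nonneg_left hY_le (sub_pos.2 hrd).le, mul_nonneg hr hv.le]
  nlinarith [mul_le_mul_of_nonneg_left hnear hr, mul_le_mul_of_nonneg_left hfar hv.le]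

end DegreeSums

section FengYu

variable {V : Type} [Fintype V] {G : SimpleGraph V} [DecidableRel G.Adj]

/-- The Feng–Yu bound. -/
theorem pred_card_mul_qSpecRad_le [Nonempty V] :
    ((Fintype.card V : ℝ) - 1) * qSpecRad G ≤ 2 * #G.edgeFinset +
      ((Fintype.card V : ℝ) - 1) * ((Fintype.card V : ℝ) - 2) := by
  classical
  have hcard : (1 : ℝ) ≤ Fintype.card V := Nat.one_le_cast.2 Fintype.card_pos
  rcases le_or_gt (qSpecRad G) 0 with hq | hq
  · have hpred : 0 ≤ ((Fintype.card V : ℤ) - 1) * ((Fintype.card V : ℤ) - 2) := by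
      rcases Nat.lt_or_eq_of_le (Fintype.card_pos (α := V)) with h | h
      · exact mul_nonneg (by omega) (by omega)
      · simp [← h]
    rify at hpred
    exact (mul_nonpos_of_nonneg_of_nonpos (sub_nonneg.2 hcard) hq).trans (by positivity)
  · obtain ⟨x, hx0, heig⟩ := exists_signlessLaplacian_mulVec_eq_qSpecRad_smul G
    obtain ⟨v, hv, hmerris⟩ := exists_mul_degree_le_sum_degree hq hx0 heig
    have hdas := pred_card_mul_le_degree_mul hv
    rify at hdas
    refine le_of_mul_le_mul_left (le_trans ?_ hdas) (Nat.cast_pos.2 hv)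
    calc (G.degree v : ℝ) * (((Fintype.card V : ℝ) - 1) * qSpecRad G)
        = ((Fintype.card V : ℝ) - 1) * (qSpecRad G * G.degree v) := by ring
      _ ≤ _ := mul_le_mul_of_nonneg_left hmerris (sub_nonneg.2 hcard)

theorem card_edgeFinset_compl_lt_of_lt_qSpecRad [DecidableEq V] {k : ℝ} (hV : 2 ≤ Fintype.card V)
    (hq : 2 * ((Fintype.card V : ℝ) - k - 1) < qSpecRad G) :
    (#Gᶜ.edgeFinset : ℝ) < k * ((Fintype.card V : ℝ) - 1) := by
  have : Nonempty V := Fintype.card_pos_iff.1 (by omega)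
  have hcard : (2 : ℝ) ≤ Fintype.card V := Nat.ofNat_le_cast.2 hV
  have htotal := two_mul_card_edgeFinset_add_two_mul_card_edgeFinset_compl (G := G)
  rify [Nat.one_le_of_lt hV] at htotal
  have hfengYu := pred_card_mul_qSpecRad_le (G := G)
  nlinarith [mul_lt_mul_of_pos_left hq (sub_pos.2 (one_lt_two.trans_le hcard))]

end FengYu

/-! ### The extremal graph -/

section AttachedCliques

variable {V : Type*} {K : Finset V} {f : V → V} {u v w : V}

/-- The cliques on `K` and on its complement, with an edge from each vertex `u` outside `K` to
`f u`. The graph `L_{n,k}` arises when `#K = n - k` and `f` is constant with value in `K`. -/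
def attachedCliques (K : Finset V) (f : V → V) : SimpleGraph V :=
  .fromRel fun u v => (u ∈ K ↔ v ∈ K) ∨ u ∉ K ∧ v = f u

theorem attachedCliques_adj : (attachedCliques K f).Adj u v ↔
    u ≠ v ∧ ((u ∈ K ↔ v ∈ K) ∨ u ∉ K ∧ v = f u ∨ v ∉ K ∧ u = f v) := by
  simp only [attachedCliques, fromRel_adj]
  tauto

instance [DecidableEq V] : DecidableRel (attachedCliques K f).Adj :=
  fun _ _ => decidable_of_iff' _ attachedCliques_adj

theorem isClique_attachedCliques : (attachedCliques K f).IsClique K :=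
  fun _ hu _ hv huv => attachedCliques_adj.2 ⟨huv, Or.inl (iff_of_true hu hv)⟩

theorem attachedCliques_const_adj_left (hw : w ∈ K) :
    (attachedCliques K fun _ => w).Adj w v ↔ w ≠ v := by
  simp only [attachedCliques_adj]
  tauto

theorem attachedCliques_const_adj_of_mem (hu : u ∈ K) (huw : u ≠ w) :
    (attachedCliques K fun _ => w).Adj u v ↔ u ≠ v ∧ v ∈ K := by
  simp only [attachedCliques_adj]
  tauto

theorem connected_attachedCliques_const (hw : w ∈ K) :
    (attachedCliques K fun _ => w).Connected := by
  refine (connected_iff_exists_forall_reachable _).2 ⟨w, fun v => ?_⟩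
  rcases eq_or_ne w v with rfl | h
  · rfl
  · exact ((attachedCliques_const_adj_left hw).2 h).reachable

theorem exists_le_attachedCliques [Fintype V] [DecidableEq V] {G : SimpleGraph V}
    [DecidableRel G.Adj] (hK : K.Nonempty) (hG : ∀ u ∉ K, #(G.neighborFinset u ∩ K) ≤ 1) :
    ∃ f : V → V, (∀ u, f u ∈ K) ∧ G ≤ attachedCliques K f := by
  have hunique (u : V) : ∃ a ∈ K, u ∉ K → ∀ b ∈ K, G.Adj u b → b = a := by
    rcases (G.neighborFinset u ∩ K).eq_empty_or_nonempty with hempty | ⟨a, ha⟩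
    · obtain ⟨w, hw⟩ := hK
      refine ⟨w, hw, fun _ b hb hub => ?_⟩
      exact absurd (mem_inter.2 ⟨(mem_neighborFinset ..).2 hub, hb⟩) (hempty ▸ notMem_empty b)
    · refine ⟨a, (mem_inter.1 ha).2, fun hu b hb hub => ?_⟩
      exact card_le_one.1 (hG u hu) b (mem_inter.2 ⟨(mem_neighborFinset ..).2 hub, hb⟩) a ha
  choose f hfK hf using hunique
  refine ⟨f, hfK, fun u v huv => attachedCliques_adj.2 ⟨huv.ne, ?_⟩⟩
  have hu := fun h hv => hf u h v hv huv
  have hv := fun h hu => hf v h u hu huv.symm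
  tauto

theorem nonempty_iso_attachedCliques_const {W : Type*} [Fintype V] [Fintype W] {K' : Finset W}
    {w' : W} (hcard : Fintype.card V = Fintype.card W) (hK : #K = #K') (hw : w ∈ K)
    (hw' : w' ∈ K') :
    Nonempty ((attachedCliques K fun _ => w) ≃g (attachedCliques K' fun _ => w')) := by
  classical
  obtain ⟨a, ha⟩ : ∃ a : {v // v ∈ K} ≃ {v // v ∈ K'}, a ⟨w, hw⟩ = ⟨w', hw'⟩ :=
    let a := Fintype.equivOfCardEq (by simpa using hK)
    ⟨a.trans (Equiv.swap (a ⟨w, hw⟩) ⟨w', hw'⟩), by simp⟩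
  let b : {v // v ∉ K} ≃ {v // v ∉ K'} := Fintype.equivOfCardEq <| by
    simp [Fintype.card_subtype_compl, hcard, hK]
  let e : V ≃ W := (Equiv.sumCompl (· ∈ K)).symm.trans
    ((a.sumCongr b).trans (Equiv.sumCompl (· ∈ K')))
  have hew : e w = w' := by simp [e, Equiv.sumCompl_symm_apply_of_pos hw, ha]
  have heK (v : V) : e v ∈ K' ↔ v ∈ K := by
    by_cases hv : v ∈ K
    · simp [e, hv, Equiv.sumCompl_symm_apply_of_pos hv]
    · simpa [e, hv, Equiv.sumCompl_symm_apply_of_neg hv] using (b ⟨v, hv⟩).2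
  exact ⟨⟨e, by simp only [attachedCliques_adj, ← hew, heK, e.injective.eq_iff, ne_eq,
    implies_true]⟩⟩

theorem Lgraph_eq_attachedCliques {n k : ℕ} (hkn : k < n) :
    Lgraph n k = attachedCliques {i : Fin n | i.val < n - k} fun _ => ⟨0, by omega⟩ := by
  ext u v
  simp only [Lgraph, fromRel_adj, attachedCliques_adj, mem_filter_univ, Fin.ext_iff]
  omega

theorem nonempty_iso_Lgraph [Fintype V] {k : ℕ} (hkn : k < Fintype.card V)
    (hK : #K = Fintype.card V - k) (hw : w ∈ K) :
    Nonempty ((attachedCliques K fun _ => w) ≃g Lgraph (Fintype.card V) k) := by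
  rw [Lgraph_eq_attachedCliques hkn]
  refine nonempty_iso_attachedCliques_const (Fintype.card_fin _).symm ?_ hw ?_
  · rw [hK, Fin.card_filter_val_lt, min_eq_right (Nat.sub_le _ _)]
  · simpa using hkn

end AttachedCliques

theorem lt_qSpecRad_Lgraph {n k : ℕ} (hk : 1 ≤ k) (hkn : k < n) :
    2 * ((n : ℝ) - k - 1) < qSpecRad (Lgraph n k) := by
  set K : Finset (Fin n) := {i : Fin n | i.val < n - k} with hK
  have hcard : #K = n - k := by
    rw [hK, Fin.card_filter_val_lt, min_eq_right (Nat.sub_le _ _)]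
  have huniv : K ≠ univ := fun h => by
    rw [h, card_univ, Fintype.card_fin] at hcard
    omega
  rw [Lgraph_eq_attachedCliques hkn, ← hK, ← Nat.cast_sub hkn.le, ← hcard]
  refine two_mul_card_sub_one_lt_qSpecRad (connected_attachedCliques_const ?_)
    isClique_attachedCliques (card_pos.1 (by omega)) huniv
  simpa [hK] using hkn

section Comparison

variable {V : Type} [Fintype V] [DecidableEq V] {K : Finset V} {f : V → V} {x : V → ℝ}

theorem dotProduct_signlessLaplacian_attachedCliques_mulVec (hf : ∀ u, f u ∈ K) :
    x ⬝ᵥ signlessLaplacian (attachedCliques K f) *ᵥ x =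
      (∑ u, ∑ v, if u ≠ v ∧ (u ∈ K ↔ v ∈ K) then (x u + x v) ^ 2 else 0) / 2 +
        ∑ u ∈ Kᶜ, (x u + x (f u)) ^ 2 := by
  have hsplit (u v : V) : (if (attachedCliques K f).Adj u v then (x u + x v) ^ 2 else 0) =
      (if u ≠ v ∧ (u ∈ K ↔ v ∈ K) then (x u + x v) ^ 2 else 0) +
        (if u ∈ Kᶜ ∧ v = f u then (x u + x v) ^ 2 else 0) +
        (if v ∈ Kᶜ ∧ u = f v then (x v + x u) ^ 2 else 0) := by
    have hu : u ∉ K → u ≠ f v := fun hu huv => hu (huv ▸ hf v)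
    have hv : v ∉ K → v ≠ f u := fun hv hvu => hv (hvu ▸ hf u)
    by_cases hu' : u ∈ K <;> by_cases hv' : v ∈ K
    · simp [attachedCliques_adj, hu', hv']
    · simp [attachedCliques_adj, hu', hv', ne_of_mem_of_not_mem hu' hv', add_comm]
    · simp [attachedCliques_adj, hu', hv', (ne_of_mem_of_not_mem hv' hu').symm]
    · simp [attachedCliques_adj, hu', hv', hu hu', hv hv']
  have hcross : ∑ u, ∑ v, (if u ∈ Kᶜ ∧ v = f u then (x u + x v) ^ 2 else 0) =
      ∑ u ∈ Kᶜ, (x u + x (f u)) ^ 2 := by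
    simp [ite_and, -mem_compl]
  rw [dotProduct_signlessLaplacian_mulVec]
  simp only [hsplit, sum_add_distrib]
  rw [sum_comm (f := fun u v => if v ∈ Kᶜ ∧ u = f v then _ else _), hcross]
  ring

theorem dotProduct_signlessLaplacian_attachedCliques_mulVec_le {w : V} (hw : w ∈ K)
    (hf : ∀ u, f u ∈ K) (hx : ∀ v, 0 ≤ x v) (hmax : ∀ v ∈ K, x v ≤ x w) :
    x ⬝ᵥ signlessLaplacian (attachedCliques K f) *ᵥ x ≤
      x ⬝ᵥ signlessLaplacian (attachedCliques K fun _ => w) *ᵥ x := by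
  rw [dotProduct_signlessLaplacian_attachedCliques_mulVec hf,
    dotProduct_signlessLaplacian_attachedCliques_mulVec fun _ => hw]
  gcongr with u
  exacts [add_nonneg (hx u) (hx _), hmax _ (hf u)]

theorem apply_eq_of_dotProduct_signlessLaplacian_attachedCliques_mulVec_eq {w : V} (hw : w ∈ K)
    (hf : ∀ u, f u ∈ K) (hx : ∀ v, 0 ≤ x v) (hmax : ∀ v ∈ K, x v ≤ x w)
    (heq : x ⬝ᵥ signlessLaplacian (attachedCliques K f) *ᵥ x =
      x ⬝ᵥ signlessLaplacian (attachedCliques K fun _ => w) *ᵥ x) {u : V} (hu : u ∉ K) :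
    x (f u) = x w := by
  rw [dotProduct_signlessLaplacian_attachedCliques_mulVec hf,
    dotProduct_signlessLaplacian_attachedCliques_mulVec fun _ => hw, add_right_inj] at heq
  have hle (v : V) : (x v + x (f v)) ^ 2 ≤ (x v + x w) ^ 2 := by
    gcongr
    exacts [add_nonneg (hx v) (hx _), hmax _ (hf v)]
  have hterm := (sum_eq_sum_iff_of_le fun v _ => hle v).1 heq u (mem_compl.2 hu)
  exact add_left_cancel <|
    (pow_left_inj₀ (add_nonneg (hx u) (hx _)) (add_nonneg (hx u) (hx w)) two_ne_zero).1 hterm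

theorem apply_ne_of_signlessLaplacian_attachedCliques_mulVec_eq {a u w : V} {c : ℝ} (hw : w ∈ K)
    (hx : ∀ v, 0 < x v)
    (heig : signlessLaplacian (attachedCliques K fun _ => w) *ᵥ x = c • x) (ha : a ∈ K)
    (haw : a ≠ w) (hu : u ∉ K) : x a ≠ x w := by
  refine ne_of_signlessLaplacian_mulVec_eq hx heig (ssubset_iff_of_subset ?_ |>.2 ⟨u, ?_, ?_⟩)
  · intro v _
    simp [attachedCliques_const_adj_left hw, eq_comm (a := v), em]
  · simp [attachedCliques_const_adj_left hw, (ne_of_mem_of_not_mem hw hu)]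
  · simp [attachedCliques_const_adj_of_mem ha haw, hu, (ne_of_mem_of_not_mem ha hu).symm]

/-- The Rayleigh quotient of `G` at its Perron vector `z` does not decrease when the edges leaving
`K` are moved to the vertex of `K` at which `z` is largest. -/
theorem exists_eq_attachedCliques_of_qSpecRad_le {G : SimpleGraph V} [DecidableRel G.Adj]
    (hK : K.Nonempty) (hG : ∀ u ∉ K, #(G.neighborFinset u ∩ K) ≤ 1)
    (hq : ∀ w ∈ K, qSpecRad (attachedCliques K fun _ => w) ≤ qSpecRad G) :
    ∃ w ∈ K, G = attachedCliques K fun _ => w := by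
  have : Nonempty V := hK.to_subtype.map (↑)
  obtain ⟨z, hz0, hz, heig⟩ := exists_nonneg_signlessLaplacian_mulVec_eq_qSpecRad_smul G
  obtain ⟨w, hw, hmax⟩ := exists_max_image K z hK
  obtain ⟨f, hf, hGf⟩ := exists_le_attachedCliques hK hG
  set L := attachedCliques K fun _ => w
  have hlower : qSpecRad L * (z ⬝ᵥ z) ≤ z ⬝ᵥ signlessLaplacian G *ᵥ z := by
    rw [heig, dotProduct_smul, smul_eq_mul]
    exact mul_le_mul_of_nonneg_right (hq w hw) (sum_nonneg fun v _ => mul_self_nonneg (z v))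
  have hGf_le := dotProduct_signlessLaplacian_mulVec_mono hGf z
  have hfL_le := dotProduct_signlessLaplacian_attachedCliques_mulVec_le hw hf hz hmax
  have hupper := dotProduct_signlessLaplacian_mulVec_le (G := L) z
  have hLeig := signlessLaplacian_mulVec_eq_of_le (hlower.trans (hGf_le.trans hfL_le))
  have hpos := pos_of_signlessLaplacian_mulVec_eq (connected_attachedCliques_const hw) hz hz0 hLeig
  refine ⟨w, hw, ?_⟩
  have hfw (u : V) (hu : u ∉ K) : f u = w := by
    by_contra hfu
    exact apply_ne_of_signlessLaplacian_attachedCliques_mulVec_eq hw hpos hLeig (hf u) hfu hu <|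
      apply_eq_of_dotProduct_signlessLaplacian_attachedCliques_mulVec_eq hw hf hz hmax
        (hfL_le.antisymm (hupper.trans (hlower.trans hGf_le))) hu
  have hGL : G ≤ L := fun u v huv => by
    have hadj := hGf huv
    rw [attachedCliques_adj] at hadj ⊢
    have := hfw u
    have := hfw v
    grind
  exact eq_of_dotProduct_signlessLaplacian_mulVec_eq hGL hpos
    ((hGf_le.trans hfL_le).antisymm (hupper.trans hlower))

end Comparison

/-! ### The main theorem -/

section LargeCycles

variable {V : Type} [Fintype V] [DecidableEq V] {G : SimpleGraph V} [DecidableRel G.Adj] {k : ℕ}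

theorem hasCycleLen_of_le_circumference {l : ℕ} (hn : 6 * k + 11 ≤ Fintype.card V)
    (he : #Gᶜ.edgeFinset < k * (Fintype.card V - 1))
    (hcirc : Fintype.card V - k + 1 ≤ circumference G) (hl : 3 ≤ l)
    (hln : l ≤ Fintype.card V - k + 1) : HasCycleLen G l := by
  obtain ⟨p, hp⟩ := exists_isCycleSeq_circumference (G := G) (by omega)
  have hlong : 4 * (k * (Fintype.card V - 1)) ≤ circumference G * (circumference G - 2) := by
    obtain ⟨r, hr⟩ := Nat.exists_eq_add_of_le hn
    calc 4 * (k * (Fintype.card V - 1)) ≤ (5 * k + 12 + r) * (5 * k + 10 + r) := by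
          rw [hr, show 6 * k + 11 + r - 1 = 6 * k + 10 + r by omega]
          nlinarith
      _ ≤ circumference G * (circumference G - 2) := Nat.mul_le_mul (by omega) (by omega)
  obtain ⟨q, hq⟩ := hp.exists_of_card_edgeFinset_compl_lt (l := l) (by omega) hl (by omega)
  exact hq.hasCycleLen

theorem exists_card_eq_forall_card_inter_le_one_of_circumference_lt
    (hn1 : 6 * k + 11 ≤ Fintype.card V) (hn2 : k ^ 2 + 2 * k + 3 ≤ Fintype.card V)
    (he : #Gᶜ.edgeFinset < k * (Fintype.card V - 1))
    (hcirc : circumference G < Fintype.card V - k + 1) :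
    ∃ K : Finset V, #K = Fintype.card V - k ∧ ∀ u ∉ K, #(G.neighborFinset u ∩ K) ≤ 1 := by
  classical
  obtain ⟨H, hGH, hH⟩ := Finite.exists_le_maximal
    (p := fun H : SimpleGraph V => circumference H < Fintype.card V - k + 1) hcirc
  have heH : #Hᶜ.edgeFinset ≤ #Gᶜ.edgeFinset :=
    card_le_card (edgeFinset_mono (compl_le_compl hGH))
  obtain ⟨K, hK, hKH⟩ := exists_card_eq_forall_card_inter_le_one hn1 hn2 (heH.trans_lt he) hH
  refine ⟨K, hK, fun u hu => (card_le_card ?_).trans (hKH u hu)⟩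
  exact inter_subset_inter_right fun v hv => by
    rw [mem_neighborFinset] at hv ⊢
    exact hGH hv

theorem card_edgeFinset_compl_lt_of_qSpecRad_Lgraph_le (hk : 1 ≤ k)
    (hkV : k + 1 < Fintype.card V)
    (hq : qSpecRad (Lgraph (Fintype.card V) k) ≤ qSpecRad G) :
    #Gᶜ.edgeFinset < k * (Fintype.card V - 1) := by
  have := card_edgeFinset_compl_lt_of_lt_qSpecRad (G := G) (by omega)
    ((lt_qSpecRad_Lgraph hk (by omega)).trans_le hq)
  rify [show 1 ≤ Fintype.card V by omega]
  exact this

theorem nonempty_iso_Lgraph_of_qSpecRad_Lgraph_le {K : Finset V} (hkV : k < Fintype.card V)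
    (hK : #K = Fintype.card V - k) (hG : ∀ u ∉ K, #(G.neighborFinset u ∩ K) ≤ 1)
    (hq : qSpecRad (Lgraph (Fintype.card V) k) ≤ qSpecRad G) :
    Nonempty (G ≃g Lgraph (Fintype.card V) k) := by
  obtain ⟨w, hw, rfl⟩ := exists_eq_attachedCliques_of_qSpecRad_le (card_pos.1 (by omega)) hG
    fun w hw => (qSpecRad_eq_of_iso (nonempty_iso_Lgraph hkV hK hw).some).trans_le hq
  exact nonempty_iso_Lgraph hkV hK hw

end LargeCycles

theorem q_spectral_large_cycles_general {V : Type} [Fintype V] (G : SimpleGraph V) {k n : ℕ}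
    (hV : Fintype.card V = n) (hk : 1 ≤ k) (hn1 : 6 * k + 11 ≤ n) (hn2 : k ^ 2 + 2 * k + 3 ≤ n)
    (hq : qSpecRad (Lgraph n k) ≤ qSpecRad G) :
    (∀ l : ℕ, 3 ≤ l → l ≤ n - k + 1 → HasCycleLen G l) ∨ Nonempty (G ≃g Lgraph n k) := by
  classical
  subst hV
  have he := card_edgeFinset_compl_lt_of_qSpecRad_Lgraph_le hk (by omega) hq
  rcases le_or_gt (Fintype.card V - k + 1) (circumference G) with hcirc | hcirc
  · exact Or.inl fun l => hasCycleLen_of_le_circumference hn1 he hcirc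
  · obtain ⟨K, hK, hKG⟩ :=
      exists_card_eq_forall_card_inter_le_one_of_circumference_lt hn1 hn2 he hcirc
    exact Or.inr (nonempty_iso_Lgraph_of_qSpecRad_Lgraph_le (by omega) hK hKG hq)

/-- Theorem 1.6 (b): signless Laplacian spectral radius condition for cycles of
consecutive lengths. -/
theorem q_spectral_large_cycles (k n : ℕ) (G : SimpleGraph (Fin n)) (hk : 1 ≤ k)
    (hn1 : 6 * k + 11 ≤ n) (hn2 : k ^ 2 + 2 * k + 3 ≤ n)
    (hq : qSpecRad (Lgraph n k) ≤ qSpecRad G) :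
    (∀ l : ℕ, 3 ≤ l → l ≤ n - k + 1 → HasCycleLen G l) ∨
      Nonempty (G ≃g Lgraph n k) :=
  q_spectral_large_cycles_general G (Fintype.card_fin n) hk hn1 hn2 hq
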